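/- arXiv:2110.07352 — 2 statements merged into one kernel-verified Lean document; each statement's English description precedes it below -/
import Mathlib

section
/- (Theorem 3.1, part 1.) Let σ > 0 and let {Z^(k)} be the exact PBCD sequence with Z^(0) ∈ S^{N−1}. Then the whole sequence {Z^(k)} converges to a KKT point of the penalized problem (P_β). -/
open Matrix Finset Filter Topology

noncomputable section

/-- Trace inner product `⟨A,B⟩ = Tr(AᵀB)` on `K×K` real matrices. -/
def mip {K : ℕ} (A B : Matrix (Fin K) (Fin K) ℝ) : ℝ := (Aᵀ * B).trace

/-- The section `S = {W : We = 𝟙, WᵀΞϱ = ϱ, Tr W = 0, W ≥ 0}` of the feasible region. -/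
def Sset {K : ℕ} (e ϱ : Fin K → ℝ) : Set (Matrix (Fin K) (Fin K) ℝ) :=
  {W | W.mulVec e = (fun _ => 1) ∧ Wᵀ.mulVec (fun j => e j * ϱ j) = ϱ ∧
    W.trace = 0 ∧ ∀ a b, 0 ≤ W a b}

/-- The discretized repulsive energy
`f(Z) = Σ_i ⟨X_i, ΛΞCΞ⟩ + Σ_{i<j} ⟨X_i, ΞΛX_jΞCΞ⟩` (blocks indexed by `Fin m`, `m = N−1`). -/
def fE {K m : ℕ} (e ϱ : Fin K → ℝ) (C : Matrix (Fin K) (Fin K) ℝ)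
    (Z : Fin m → Matrix (Fin K) (Fin K) ℝ) : ℝ :=
  (∑ i, mip (Z i) (diagonal ϱ * diagonal e * C * diagonal e)) +
    ∑ i, ∑ j ∈ Finset.Ioi i,
      mip (Z i) (diagonal e * diagonal ϱ * Z j * diagonal e * C * diagonal e)

/-- The `ℓ₁`-penalized energy `f_β(Z) = f(Z) + β Σ_{i<j} ⟨X_i, X_j⟩`. -/
def fB {K m : ℕ} (e ϱ : Fin K → ℝ) (C : Matrix (Fin K) (Fin K) ℝ) (β : ℝ)
    (Z : Fin m → Matrix (Fin K) (Fin K) ℝ) : ℝ :=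
  fE e ϱ C Z + β * ∑ i, ∑ j ∈ Finset.Ioi i, mip (Z i) (Z j)

/-- The block gradient
`∇_{X_i} f_β(Z) = ΛΞCΞ + Σ_{j<i} ΛΞX_jΞCΞ + Σ_{j>i} ΞΛX_jΞCΞ + β Σ_{j≠i} X_j`. -/
def gradB {K m : ℕ} (e ϱ : Fin K → ℝ) (C : Matrix (Fin K) (Fin K) ℝ) (β : ℝ)
    (Z : Fin m → Matrix (Fin K) (Fin K) ℝ) (i : Fin m) : Matrix (Fin K) (Fin K) ℝ :=
  diagonal ϱ * diagonal e * C * diagonal e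
    + ∑ j ∈ Finset.Iio i, diagonal ϱ * diagonal e * Z j * diagonal e * C * diagonal e
    + ∑ j ∈ Finset.Ioi i, diagonal e * diagonal ϱ * Z j * diagonal e * C * diagonal e
    + β • ∑ j ∈ Finset.univ.erase i, Z j

/-- `Z* ∈ S^{N−1}` is a KKT point of the penalized problem `(P_β)` if
`⟨∇_{X_i} f_β(Z*), X − X*_i⟩ ≥ 0` for all `X ∈ S` and all blocks `i`. -/
def IsKKT {K m : ℕ} (e ϱ : Fin K → ℝ) (C : Matrix (Fin K) (Fin K) ℝ) (β : ℝ)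
    (Z : Fin m → Matrix (Fin K) (Fin K) ℝ) : Prop :=
  (∀ i, Z i ∈ Sset e ϱ) ∧
    ∀ i, ∀ X ∈ Sset e ϱ, 0 ≤ mip (gradB e ϱ C β Z i) (X - Z i)

/-- The `i`-th block objective of PBCD at outer iterate `Zold` (with the already-updated
blocks taken from `Znew`):
`X ↦ f_β(Znew_{<i}, X, Zold_{>i}) + (σ/2)‖X − Zold_i‖_F²`. -/
def blockObj {K m : ℕ} (e ϱ : Fin K → ℝ) (C : Matrix (Fin K) (Fin K) ℝ) (β σ : ℝ)
    (Zold Znew : Fin m → Matrix (Fin K) (Fin K) ℝ) (i : Fin m)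
    (X : Matrix (Fin K) (Fin K) ℝ) : ℝ :=
  fB e ϱ C β (fun j => if j < i then Znew j else if j = i then X else Zold j)
    + σ / 2 * mip (X - Zold i) (X - Zold i)

/-- `Zseq` is an exact PBCD sequence: for every `k` and every block `i` (in order),
`X_i^{(k+1)}` is the (unique) global solution of the `i`-th block problem. -/
def IsPBCD {K m : ℕ} (e ϱ : Fin K → ℝ) (C : Matrix (Fin K) (Fin K) ℝ) (β σ : ℝ)
    (Zseq : ℕ → Fin m → Matrix (Fin K) (Fin K) ℝ) : Prop :=
  ∀ k i, Zseq (k + 1) i ∈ Sset e ϱ ∧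
    ∀ X ∈ Sset e ϱ,
      blockObj e ϱ C β σ (Zseq k) (Zseq (k + 1)) i (Zseq (k + 1) i) ≤
        blockObj e ϱ C β σ (Zseq k) (Zseq (k + 1)) i X

/-- `Zbar` is the block-optimal sequence of `Zseq`: `X̄_i^{(k+1)}` is the (unique) global
solution of the `i`-th block problem built from the iterates of `Zseq` themselves. -/
def IsBlockOpt {K m : ℕ} (e ϱ : Fin K → ℝ) (C : Matrix (Fin K) (Fin K) ℝ) (β σ : ℝ)
    (Zseq Zbar : ℕ → Fin m → Matrix (Fin K) (Fin K) ℝ) : Prop :=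
  ∀ k i, Zbar (k + 1) i ∈ Sset e ϱ ∧
    ∀ X ∈ Sset e ϱ,
      blockObj e ϱ C β σ (Zseq k) (Zseq (k + 1)) i (Zbar (k + 1) i) ≤
        blockObj e ϱ C β σ (Zseq k) (Zseq (k + 1)) i X

/-- Frobenius norm of a block tuple `Z ∈ (ℝ^{K×K})^m`. -/
def nZ {K m : ℕ} (Z : Fin m → Matrix (Fin K) (Fin K) ℝ) : ℝ :=
  Real.sqrt (∑ i, mip (Z i) (Z i))

/-!
A quadratic function has a constant value on its critical set in an affine subspace, and near
stationarity it deviates from that value by at most a multiple of the squared gradient norm. Applied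
to each of the finitely many faces of a polyhedron, this gives a Łojasiewicz inequality with
exponent `1/2` and finitely many critical values.

The proximal term makes every sweep decrease the objective by a multiple of the squared step, and
leaves a stationarity error proportional to the step. The objective values are bounded below because
`S` is compact, so the steps tend to zero and the objective gap is eventually at most a multiple of
the squared step. Decrease then makes the gap contract geometrically, so the steps are summable and
the limit is stationary.
-/

section Lojasiewicz

variable {E : Type*} [NormedAddCommGroup E] [NormedSpace ℝ E]

/-- The quadratic function `x ↦ l(x) + ½ B(x, x)`. For symmetric `B` its derivative at `x` is
`l + B x`. -/
def quadraticFun (l : E →L[ℝ] ℝ) (B : E →L[ℝ] E →L[ℝ] ℝ) (x : E) : ℝ := l x + 1 / 2 * B x x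

variable {l : E →L[ℝ] ℝ} {B : E →L[ℝ] E →L[ℝ] ℝ}

lemma quadraticFun_add (hB : ∀ x y, B x y = B y x) (x d : E) :
    quadraticFun l B (x + d) = quadraticFun l B x + quadraticFun (l + B x) B d := by
  simp only [quadraticFun, map_add, _root_.add_apply, hB d x]
  ring

lemma hasFDerivAt_quadraticFun (hB : ∀ x y, B x y = B y x) (x : E) :
    HasFDerivAt (quadraticFun l B) (l + B x) x := by
  have hBB := B.hasFDerivAt_of_bilinear (hasFDerivAt_id x) (hasFDerivAt_id x)
  refine (l.hasFDerivAt.add (hBB.const_mul (1 / 2))).congr_fderiv ?_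
  ext d
  simp only [_root_.add_apply, _root_.smul_apply, smul_eq_mul, id_eq,
    ContinuousLinearMap.precompR_apply, ContinuousLinearMap.precompL_apply,
    ContinuousLinearMap.compL_apply, ContinuousLinearMap.comp_id, ContinuousLinearMap.id_apply,
    hB d x]
  ring

lemma lipschitzWith_quadraticFun_deriv : LipschitzWith ‖B‖₊ fun x => l + B x :=
  LipschitzWith.of_dist_le_mul fun x y => by
    simpa using B.lipschitz.dist_le_mul x y

lemma exists_norm_le_mul_norm_map [FiniteDimensional ℝ E] {F : Type*} [NormedAddCommGroup F]
    [NormedSpace ℝ F] (T : E →L[ℝ] F) : ∃ C : ℝ, 0 ≤ C ∧ ∀ x, ∃ d, T d = T x ∧ ‖d‖ ≤ C * ‖T x‖ := by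
  obtain ⟨s, hs⟩ := T.rangeRestrict.exists_rightInverse_of_surjective
    (by rw [T.toLinearMap_rangeRestrict, LinearMap.range_rangeRestrict])
  refine ⟨‖s‖, norm_nonneg s, fun x => ⟨s (T.rangeRestrict x), ?_, s.le_opNorm _⟩⟩
  exact congrArg Subtype.val (DFunLike.congr_fun hs (T.rangeRestrict x))

/-- Łojasiewicz inequality with exponent `1/2` for a quadratic function. -/
theorem exists_abs_quadraticFun_sub_le_sq [FiniteDimensional ℝ E] (l : E →L[ℝ] ℝ)
    (hB : ∀ x y, B x y = B y x) :
    ∃ v C : ℝ, ∀ᶠ r in 𝓝 0, ∀ x, ‖l + B x‖ ≤ r → |quadraticFun l B x - v| ≤ C * r ^ 2 := by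
  by_cases hl : -l ∈ B.range
  · obtain ⟨z, hz : B z = -l⟩ := hl
    obtain ⟨C, hC₀, hC⟩ := exists_norm_le_mul_norm_map B
    refine ⟨quadraticFun l B z, 1 / 2 * C, .of_forall fun r x hx => ?_⟩
    obtain ⟨d, hd, hdC⟩ := hC (x - z)
    have hgrad : l + B x = B d := by rw [hd, map_sub, hz, sub_neg_eq_add, add_comm]
    rw [← hd] at hdC
    rw [hgrad] at hx
    have hvalue : quadraticFun l B x - quadraticFun l B z = 1 / 2 * B d d := by
      have hswap : B (x - z) (x - z) = B d d := by rw [← hd, hB d, ← hd]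
      rw [← add_sub_cancel z x, quadraticFun_add hB, add_sub_cancel_left, hz, add_neg_cancel,
        quadraticFun, _root_.zero_apply, zero_add, hswap]
    have hr : 0 ≤ r := (norm_nonneg _).trans hx
    calc |quadraticFun l B x - quadraticFun l B z| = 1 / 2 * ‖B d d‖ := by
          rw [hvalue, abs_mul, abs_of_pos one_half_pos, Real.norm_eq_abs]
      _ ≤ 1 / 2 * (‖B d‖ * (C * ‖B d‖)) := by grw [(B d).le_opNorm d, hdC]
      _ ≤ 1 / 2 * (r * (C * r)) := by gcongr
      _ = 1 / 2 * C * r ^ 2 := by ring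
  · have hclosed : IsClosed (B.range : Set (E →L[ℝ] ℝ)) := Submodule.closed_of_finiteDimensional _
    obtain ⟨ε, hε, hball⟩ := Metric.isOpen_iff.1 hclosed.isOpen_compl (-l) hl
    refine ⟨0, 0, (eventually_lt_nhds hε).mono fun r hr x hx => ?_⟩
    refine (hball (?_ : B x ∈ Metric.ball (-l) ε) ⟨x, rfl⟩).elim
    rw [mem_ball_iff_norm, sub_neg_eq_add, add_comm]
    exact hx.trans_lt hr

lemma exists_abs_quadraticFun_sub_le_sq_of_sub_mem [FiniteDimensional ℝ E] (l : E →L[ℝ] ℝ)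
    (hB : ∀ x y, B x y = B y x) (V : Submodule ℝ E) (z : E) :
    ∃ v C : ℝ, ∀ᶠ r in 𝓝 0, ∀ x, x - z ∈ V → ‖(l + B x) ∘L V.subtypeL‖ ≤ r →
      |quadraticFun l B x - v| ≤ C * r ^ 2 := by
  obtain ⟨v, C, h⟩ := exists_abs_quadraticFun_sub_le_sq ((l + B z) ∘L V.subtypeL)
    (B := B.bilinearComp V.subtypeL V.subtypeL) fun x y => hB x y
  refine ⟨quadraticFun l B z + v, C, h.mono fun r hr x hx hxr => ?_⟩
  have hgrad : (l + B z) ∘L V.subtypeL + B.bilinearComp V.subtypeL V.subtypeL ⟨x - z, hx⟩ =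
      (l + B x) ∘L V.subtypeL := by
    ext d
    simp
  rw [← add_sub_cancel z x, quadraticFun_add hB, add_sub_add_left_eq_sub]
  exact hr ⟨x - z, hx⟩ (hgrad ▸ hxr)

end Lojasiewicz

section Polyhedra

variable {E : Type*} [NormedAddCommGroup E] [NormedSpace ℝ E]

/-- A polyhedral set: the solution set of finitely many inequalities `f.2 ≤ f.1 x`, each encoded
as a pair `f` of a continuous linear functional and a real bound. -/
def IsPolyhedral (P : Set E) : Prop :=
  ∃ A : Set ((E →L[ℝ] ℝ) × ℝ), A.Finite ∧ P = {x | ∀ f ∈ A, f.2 ≤ f.1 x}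

lemma isPolyhedral_halfSpace_ge {φ : E → ℝ} (hφ : IsLinearMap ℝ φ) (hcont : Continuous φ) (c : ℝ) :
    IsPolyhedral {x | c ≤ φ x} :=
  ⟨{(⟨hφ.mk' φ, hcont⟩, c)}, Set.finite_singleton _, by
    simp only [Set.mem_singleton_iff, forall_eq]
    rfl⟩

lemma IsPolyhedral.iInter {ι : Type*} [Finite ι] {P : ι → Set E} (hP : ∀ i, IsPolyhedral (P i)) :
    IsPolyhedral (⋂ i, P i) := by
  choose A hA hPA using hP
  refine ⟨⋃ i, A i, Set.finite_iUnion hA, ?_⟩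
  ext x
  simp only [hPA, Set.mem_iInter, Set.mem_ofPred_eq, Set.mem_iUnion]
  exact ⟨fun h f ⟨i, hi⟩ => h i f hi, fun h i f hi => h f ⟨i, hi⟩⟩

lemma IsPolyhedral.inter {P Q : Set E} (hP : IsPolyhedral P) (hQ : IsPolyhedral Q) :
    IsPolyhedral (P ∩ Q) := by
  rw [Set.inter_eq_iInter]
  exact .iInter (Bool.forall_bool.2 ⟨hQ, hP⟩)

lemma isPolyhedral_hyperplane {φ : E → ℝ} (hφ : IsLinearMap ℝ φ) (hcont : Continuous φ) (c : ℝ) :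
    IsPolyhedral {x | φ x = c} := by
  convert (isPolyhedral_halfSpace_ge hφ hcont c).inter
    (isPolyhedral_halfSpace_ge (-hφ.mk' φ).isLinear hcont.neg (-c)) using 1
  ext x
  simp [le_antisymm_iff, and_comm]

lemma IsPolyhedral.preimage {F : Type*} [NormedAddCommGroup F] [NormedSpace ℝ F] {P : Set F}
    (hP : IsPolyhedral P) (T : E →L[ℝ] F) : IsPolyhedral (T ⁻¹' P) := by
  obtain ⟨A, hA, rfl⟩ := hP
  refine ⟨(fun f : (F →L[ℝ] ℝ) × ℝ => (f.1 ∘L T, f.2)) '' A, hA.image _, ?_⟩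
  ext x
  simp only [Set.mem_preimage, Set.mem_ofPred_eq, Set.forall_mem_image,
    ContinuousLinearMap.comp_apply]

lemma IsPolyhedral.pi {ι : Type*} [Fintype ι] {F : ι → Type*} [∀ i, NormedAddCommGroup (F i)]
    [∀ i, NormedSpace ℝ (F i)] {P : ∀ i, Set (F i)} (hP : ∀ i, IsPolyhedral (P i)) :
    IsPolyhedral (Set.univ.pi P) := by
  rw [Set.univ_pi_eq_iInter]
  exact .iInter fun i => (hP i).preimage (.proj i)

lemma IsPolyhedral.isClosed {P : Set E} (hP : IsPolyhedral P) : IsClosed P := by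
  obtain ⟨A, -, rfl⟩ := hP
  simp only [Set.ofPred_forall]
  exact isClosed_biInter fun f _ => isClosed_le continuous_const f.1.continuous

lemma IsPolyhedral.convex {P : Set E} (hP : IsPolyhedral P) : Convex ℝ P := by
  obtain ⟨A, -, rfl⟩ := hP
  simp only [Set.ofPred_forall]
  exact convex_iInter₂ fun f _ => convex_halfSpace_ge f.1.isLinear f.2

/-- The constraints of the system `A` that hold with equality at `x`. -/
def activeSet (A : Set ((E →L[ℝ] ℝ) × ℝ)) (x : E) : Set ((E →L[ℝ] ℝ) × ℝ) :=
  {f ∈ A | f.1 x = f.2}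

/-- The directions along which the constraints in `A` stay constant. For `A = activeSet _ x` this
is the direction of the affine span of the face whose relative interior contains `x`. -/
def faceDirections (A : Set ((E →L[ℝ] ℝ) × ℝ)) : Submodule ℝ E := ⨅ f ∈ A, f.1.ker

lemma mem_faceDirections {A : Set ((E →L[ℝ] ℝ) × ℝ)} {d : E} :
    d ∈ faceDirections A ↔ ∀ f ∈ A, f.1 d = 0 := by
  simp [faceDirections]

lemma sub_mem_faceDirections {A : Set ((E →L[ℝ] ℝ) × ℝ)} {x y : E}
    (h : activeSet A x = activeSet A y) : x - y ∈ faceDirections (activeSet A x) :=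
  mem_faceDirections.2 fun f hf => by rw [map_sub, hf.2, (h ▸ hf : f ∈ activeSet A y).2, sub_self]

lemma exists_pos_forall_le_map_add_smul {A : Set ((E →L[ℝ] ℝ) × ℝ)} (hA : A.Finite) {x d : E}
    (hx : ∀ f ∈ A, f.2 ≤ f.1 x) (hd : d ∈ faceDirections (activeSet A x)) :
    ∃ t : ℝ, 0 < t ∧ ∀ f ∈ A, f.2 ≤ f.1 (x + t • d) := by
  have hsmall : ∀ᶠ t : ℝ in 𝓝[>] 0, ∀ f ∈ A, f.2 ≤ f.1 (x + t • d) := by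
    refine (eventually_all_finite hA).2 fun f hf => ?_
    rcases (hx f hf).eq_or_lt with hactive | hslack
    · refine .of_forall fun t => ?_
      simp [mem_faceDirections.1 hd f ⟨hf, hactive.symm⟩, hactive]
    · have hcont : Continuous fun t : ℝ => f.1 (x + t • d) := by fun_prop
      refine nhdsWithin_le_nhds ((hcont.tendsto 0).eventually_const_le ?_)
      simpa using hslack
  exact (eventually_mem_nhdsWithin.and hsmall).exists

/-- `x` satisfies the variational inequality for the gradient `g` over `P` up to a slope `r`; for
`r = 0` and `x ∈ P` this is first-order stationarity. -/
def IsApproxStationary (P : Set E) (g : E →L[ℝ] ℝ) (r : ℝ) (x : E) : Prop :=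
  ∀ y ∈ P, -(r * ‖y - x‖) ≤ g (y - x)

lemma IsApproxStationary.norm_comp_subtypeL_le {P : Set E} {g : E →L[ℝ] ℝ} {r : ℝ} {x : E}
    (h : IsApproxStationary P g r x) (hr : 0 ≤ r) {V : Submodule ℝ E}
    (hV : ∀ d ∈ V, ∃ t : ℝ, 0 < t ∧ x + t • d ∈ P) : ‖g ∘L V.subtypeL‖ ≤ r := by
  have hlower : ∀ d ∈ V, -(r * ‖d‖) ≤ g d := by
    intro d hd
    obtain ⟨t, ht, hmem⟩ := hV d hd
    have hscaled := h _ hmem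
    rw [add_sub_cancel_left, norm_smul, Real.norm_of_nonneg ht.le, map_smul, smul_eq_mul,
      mul_left_comm, ← mul_neg] at hscaled
    exact le_of_mul_le_mul_left hscaled ht
  refine ContinuousLinearMap.opNorm_le_bound _ hr fun d => abs_le.2 ⟨hlower d d.2, ?_⟩
  simpa using neg_le_neg (hlower (-d) (V.neg_mem d.2))

lemma IsApproxStationary.of_tendsto {P : Set E} {x : ℕ → E} {g : ℕ → E →L[ℝ] ℝ} {r : ℕ → ℝ}
    {x' : E} {g' : E →L[ℝ] ℝ} {r' : ℝ} (hx : Tendsto x atTop (𝓝 x')) (hg : Tendsto g atTop (𝓝 g'))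
    (hr : Tendsto r atTop (𝓝 r')) (h : ∀ k, IsApproxStationary P (g k) (r k) (x k)) :
    IsApproxStationary P g' r' x' := by
  intro y hy
  have hd : Tendsto (fun k => y - x k) atTop (𝓝 (y - x')) := hx.const_sub y
  have hgd : Tendsto (fun k => g k (y - x k)) atTop (𝓝 (g' (y - x'))) :=
    (isBoundedBilinearMap_apply.continuous.tendsto (g', y - x')).comp (hg.prodMk_nhds hd)
  exact le_of_tendsto_of_tendsto' (hr.mul hd.norm).neg hgd fun k => h k y hy

/-- Łojasiewicz inequality with exponent `1/2` for a quadratic function on a polyhedral set `P`.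
The finite set `Q` contains one critical value for each face of `P`. -/
theorem IsPolyhedral.exists_finite_abs_quadraticFun_sub_le_sq [FiniteDimensional ℝ E] {P : Set E}
    (hP : IsPolyhedral P) (l : E →L[ℝ] ℝ) {B : E →L[ℝ] E →L[ℝ] ℝ} (hB : ∀ x y, B x y = B y x) :
    ∃ (Q : Set ℝ) (C : ℝ), Q.Finite ∧ ∀ᶠ r in 𝓝[≥] 0, ∀ x ∈ P,
      IsApproxStationary P (l + B x) r x → ∃ v ∈ Q, |quadraticFun l B x - v| ≤ C * r ^ 2 := by
  obtain ⟨A, hA, rfl⟩ := hP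
  have hface : ∀ I : A.powerset, ∃ v C : ℝ, ∀ᶠ r in 𝓝 0, ∀ x, activeSet A x = I →
      ‖(l + B x) ∘L (faceDirections (I : Set _)).subtypeL‖ ≤ r →
        |quadraticFun l B x - v| ≤ C * r ^ 2 := by
    intro I
    by_cases hI : ∃ z, activeSet A z = I
    · obtain ⟨z, hz⟩ := hI
      obtain ⟨v, C, h⟩ := exists_abs_quadraticFun_sub_le_sq_of_sub_mem l hB (faceDirections I) z
      refine ⟨v, C, h.mono fun r hr x hx => hr x ?_⟩
      rw [← hx]
      exact sub_mem_faceDirections (hx.trans hz.symm)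
    · exact ⟨0, 0, .of_forall fun r x hx => (hI ⟨x, hx⟩).elim⟩
  choose v C hvC using hface
  have : Finite A.powerset := hA.finite_subsets
  obtain ⟨C', hC'⟩ := (Set.finite_range C).bddAbove
  refine ⟨Set.range v, C', Set.finite_range v, ?_⟩
  filter_upwards [nhdsWithin_le_nhds (eventually_all.2 hvC), self_mem_nhdsWithin]
    with r hr hr₀ x hx hstat
  let I : A.powerset := ⟨activeSet A x, Set.sep_subset _ _⟩
  have hslope : ‖(l + B x) ∘L (faceDirections (I : Set _)).subtypeL‖ ≤ r :=
    hstat.norm_comp_subtypeL_le hr₀ fun d hd => exists_pos_forall_le_map_add_smul hA hx hd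
  refine ⟨v I, ⟨I, rfl⟩, (hr I x rfl hslope).trans ?_⟩
  gcongr
  exact hC' ⟨I, rfl⟩

end Polyhedra

section SufficientDecrease

lemma eventually_abs_sub_le_of_finite {α : Type*} {F : Filter α} {Q : Set ℝ} (hQ : Q.Finite)
    {u s : α → ℝ} {L : ℝ} (hu : Tendsto u F (𝓝 L)) (hs : Tendsto s F (𝓝 0))
    (h : ∀ᶠ k in F, ∃ v ∈ Q, |u k - v| ≤ s k) : ∀ᶠ k in F, |u k - L| ≤ s k := by
  have hfar : ∀ᶠ k in F, ∀ v ∈ Q, v ≠ L → s k < |u k - v| := by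
    refine (eventually_all_finite hQ).2 fun v _ => ?_
    by_cases hv : v = L
    · exact .of_forall fun k hne => (hne hv).elim
    · exact (hs.eventually_lt (hu.sub_const v).abs (abs_pos.2 (sub_ne_zero.2 (Ne.symm hv)))).mono
        fun k hk _ => hk
  filter_upwards [h, hfar] with k ⟨v, hvQ, hv⟩ hk
  obtain rfl : v = L := by
    by_contra hne
    exact (hk v hvQ hne).not_ge hv
  exact hv

variable {X : Type*} [PseudoMetricSpace X] {x : ℕ → X} {u : ℕ → ℝ} {a C L : ℝ}

lemma antitone_of_sufficient_decrease (ha : 0 < a)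
    (hdec : ∀ k, u (k + 1) + a * dist (x (k + 1)) (x k) ^ 2 ≤ u k) : Antitone u :=
  antitone_nat_of_succ_le fun k => by
    have : 0 ≤ a * dist (x (k + 1)) (x k) ^ 2 := by positivity
    linarith [hdec k]

lemma tendsto_dist_zero_of_sufficient_decrease (ha : 0 < a) (hu : Tendsto u atTop (𝓝 L))
    (hdec : ∀ k, u (k + 1) + a * dist (x (k + 1)) (x k) ^ 2 ≤ u k) :
    Tendsto (fun k => dist (x (k + 1)) (x k)) atTop (𝓝 0) := by
  have hgap : Tendsto (fun k => √((u k - u (k + 1)) / a)) atTop (𝓝 0) := by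
    simpa using ((hu.sub (hu.comp (tendsto_add_atTop_nat 1))).div_const a).sqrt
  refine squeeze_zero (fun k => dist_nonneg) (fun k => Real.le_sqrt_of_sq_le ?_) hgap
  rw [le_div_iff₀ ha]
  linarith [hdec k]

lemma cauchySeq_of_sufficient_decrease (ha : 0 < a) (hC : 0 ≤ C) (hL : ∀ k, L ≤ u k)
    (hdec : ∀ k, u (k + 1) + a * dist (x (k + 1)) (x k) ^ 2 ≤ u k)
    (herror : ∀ᶠ k in atTop, u (k + 1) - L ≤ C * dist (x (k + 1)) (x k) ^ 2) : CauchySeq x := by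
  obtain ⟨k₀, hk₀⟩ := eventually_atTop.1 herror
  set θ := C / (C + a)
  have hθ : 0 ≤ θ := by positivity
  have hθ_lt : θ < 1 := (div_lt_one (by positivity)).2 (by linarith)
  have hcontract : ∀ k, u (k + 1 + k₀) - L ≤ θ * (u (k + k₀) - L) := by
    intro k
    rw [div_mul_eq_mul_div, le_div_iff₀ (by positivity), add_right_comm]
    nlinarith [hk₀ (k + k₀) (by lia), hdec (k + k₀)]
  have hgeometric : ∀ k, u (k + k₀) - L ≤ θ ^ k * (u k₀ - L) := fun k => by
    simpa using le_geom (u := fun k => u (k + k₀) - L) hθ k fun j _ => hcontract j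
  have hstep : ∀ k, dist (x (k + k₀)) (x (k + 1 + k₀)) ≤ √((u k₀ - L) / a) * √θ ^ k := by
    intro k
    have hgap : 0 ≤ (u k₀ - L) / a := div_nonneg (sub_nonneg.2 (hL k₀)) ha.le
    refine le_of_sq_le_sq ?_ (by positivity)
    rw [mul_pow, Real.sq_sqrt hgap, ← pow_mul, mul_comm k, pow_mul, Real.sq_sqrt hθ,
      div_mul_eq_mul_div, le_div_iff₀ ha, dist_comm, add_right_comm]
    linarith [hdec (k + k₀), hgeometric k, hL (k + k₀ + 1)]
  exact (cauchySeq_shift k₀).1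
    (cauchySeq_of_le_geometric _ _ ((Real.sqrt_lt' one_pos).2 (by simpa using hθ_lt)) hstep)

/-- Sufficient decrease, together with an approximate stationarity whose error is proportional to
the step, forces the whole sequence to converge: the Łojasiewicz inequality turns the decrease
into a linear rate. -/
theorem IsPolyhedral.exists_tendsto_isApproxStationary {E : Type*} [NormedAddCommGroup E]
    [NormedSpace ℝ E] [FiniteDimensional ℝ E] {P : Set E} (hP : IsPolyhedral P) {l : E →L[ℝ] ℝ}
    {B : E →L[ℝ] E →L[ℝ] ℝ} (hB : ∀ x y, B x y = B y x) {x : ℕ → E} {a b : ℝ} (ha : 0 < a)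
    (hb : 0 ≤ b) (hx : ∀ k, x k ∈ P)
    (hbdd : BddBelow (Set.range fun k => quadraticFun l B (x k)))
    (hdec : ∀ k, quadraticFun l B (x (k + 1)) + a * dist (x (k + 1)) (x k) ^ 2 ≤
      quadraticFun l B (x k))
    (hstat : ∀ k, IsApproxStationary P (l + B (x (k + 1))) (b * dist (x (k + 1)) (x k))
      (x (k + 1))) :
    ∃ z ∈ P, IsApproxStationary P (l + B z) 0 z ∧ Tendsto x atTop (𝓝 z) := by
  obtain ⟨Q, C, hQ, hloj⟩ := hP.exists_finite_abs_quadraticFun_sub_le_sq l hB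
  have hanti := antitone_of_sufficient_decrease (u := fun k => quadraticFun l B (x k)) ha hdec
  have hlim := tendsto_atTop_ciInf hanti hbdd
  have hstep := tendsto_dist_zero_of_sufficient_decrease ha hlim hdec
  have hres : Tendsto (fun k => b * dist (x (k + 1)) (x k)) atTop (𝓝 0) := by
    simpa using hstep.const_mul b
  have hres' : Tendsto (fun k => b * dist (x (k + 1)) (x k)) atTop (𝓝[≥] 0) :=
    tendsto_nhdsWithin_iff.2 ⟨hres, .of_forall fun k => Set.mem_Ici.2 (by positivity)⟩
  have herror := eventually_abs_sub_le_of_finite hQ (hlim.comp (tendsto_add_atTop_nat 1))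
    (by simpa using (hres.pow 2).const_mul C)
    ((hres'.eventually hloj).mono fun k hk => hk _ (hx (k + 1)) (hstat k))
  have hcauchy : CauchySeq x := by
    refine cauchySeq_of_sufficient_decrease ha (C := max C 0 * b ^ 2) (by positivity)
      (fun k => ciInf_le hbdd k) hdec (herror.mono fun k hk => (le_of_abs_le hk).trans ?_)
    rw [mul_pow, ← mul_assoc]
    gcongr
    exact le_max_left C 0
  have : CompleteSpace E := FiniteDimensional.complete ℝ E
  obtain ⟨z, hz⟩ := cauchySeq_tendsto_of_complete hcauchy
  have hz' := hz.comp (tendsto_add_atTop_nat 1)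
  exact ⟨z, hP.isClosed.mem_of_tendsto hz (.of_forall hx),
    .of_tendsto hz' ((B.continuous.tendsto z).comp hz' |>.const_add l) hres hstat, hz⟩

end SufficientDecrease

section ProxBCD

variable {m : ℕ} {E : Fin m → Type*}

/-- The point reached by a Gauss–Seidel sweep from `x` to `x'` once the blocks of index less than
`n` are updated. -/
def sweep (x x' : ∀ i, E i) (n : ℕ) : ∀ i, E i := fun j => if j < n then x' j else x j

lemma sweep_zero (x x' : ∀ i, E i) : sweep x x' 0 = x := by
  ext j
  simp [sweep]

lemma sweep_self (x x' : ∀ i, E i) : sweep x x' m = x' := by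
  ext j
  simp [sweep]

lemma update_sweep_self (x x' : ∀ i, E i) (i : Fin m) :
    Function.update (sweep x x' i) i (x i) = sweep x x' i := by
  rw [Function.update_eq_self_iff]
  simp [sweep]

lemma update_sweep_succ (x x' : ∀ i, E i) (i : Fin m) :
    Function.update (sweep x x' i) i (x' i) = sweep x x' (i + 1) := by
  ext j
  rcases eq_or_ne j i with rfl | hj
  · simp [sweep]
  · have hlt : (j : ℕ) < i + 1 ↔ (j : ℕ) < i := by lia
    simp [sweep, hj, hlt]

lemma update_sweep_eq_ite {α : Type*} (x x' : Fin m → α) (i : Fin m) (y : α) :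
    Function.update (sweep x x' i) i y =
      fun j => if j < i then x' j else if j = i then y else x j := by
  ext j
  rcases eq_or_ne j i with rfl | hj
  · simp
  · simp [sweep, hj]

lemma dist_sweep_le [∀ i, PseudoMetricSpace (E i)] (x x' : ∀ i, E i) (n : ℕ) :
    dist x' (sweep x x' n) ≤ dist x' x := by
  refine (dist_pi_le_iff dist_nonneg).2 fun j => ?_
  by_cases hj : j < n
  · simp [sweep, hj]
  · simpa [sweep, hj] using dist_le_pi_dist x' x j

lemma pi_norm_sq_le_sum {ι : Type*} [Fintype ι] {F : ι → Type*}
    [∀ i, SeminormedAddCommGroup (F i)] (x : ∀ i, F i) : ‖x‖ ^ 2 ≤ ∑ i, ‖x i‖ ^ 2 := by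
  rw [← Real.le_sqrt (norm_nonneg x) (by positivity), pi_norm_le_iff_of_nonneg (Real.sqrt_nonneg _)]
  exact fun i => Real.le_sqrt_of_sq_le
    (Finset.single_le_sum (f := fun i => ‖x i‖ ^ 2) (fun j _ => sq_nonneg _) (Finset.mem_univ i))

variable [∀ i, NormedAddCommGroup (E i)]

/-- `x'` results from `x` by one exact proximal block-coordinate-descent sweep for `f` over
`∏ i, S i`: the blocks are minimised in order, each with the proximal weight `σ / 2` and with the
preceding blocks already updated. -/
def IsProxBCDSweep (f : (∀ i, E i) → ℝ) (S : ∀ i, Set (E i)) (σ : ℝ) (x x' : ∀ i, E i) : Prop :=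
  ∀ i, x' i ∈ S i ∧ IsMinOn
    (fun y => f (Function.update (sweep x x' i) i y) + σ / 2 * ‖y - x i‖ ^ 2) (S i) (x' i)

variable {f : (∀ i, E i) → ℝ} {S : ∀ i, Set (E i)} {σ : ℝ} {x x' : ∀ i, E i}

lemma IsProxBCDSweep.mem_pi (h : IsProxBCDSweep f S σ x x') : x' ∈ Set.univ.pi S :=
  fun i _ => (h i).1

lemma IsProxBCDSweep.sweep_succ_add_le (h : IsProxBCDSweep f S σ x x') (hx : x ∈ Set.univ.pi S)
    (i : Fin m) :
    f (sweep x x' (i + 1)) + σ / 2 * ‖x' i - x i‖ ^ 2 ≤ f (sweep x x' i) := by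
  simpa [update_sweep_succ, update_sweep_self] using isMinOn_iff.1 (h i).2 (x i) (hx i trivial)

lemma IsProxBCDSweep.add_le (h : IsProxBCDSweep f S σ x x') (hσ : 0 ≤ σ)
    (hx : x ∈ Set.univ.pi S) : f x' + σ / 2 * dist x' x ^ 2 ≤ f x := by
  have htelescope : ∑ i : Fin m, (f (sweep x x' i) - f (sweep x x' (i + 1))) = f x - f x' := by
    rw [Fin.sum_univ_eq_sum_range fun n => f (sweep x x' n) - f (sweep x x' (n + 1)),
      Finset.sum_range_sub', sweep_zero, sweep_self]
  calc f x' + σ / 2 * dist x' x ^ 2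
      ≤ f x' + σ / 2 * ∑ i, ‖x' i - x i‖ ^ 2 := by
        grw [dist_eq_norm, pi_norm_sq_le_sum]
        rfl
    _ ≤ f x' + ∑ i : Fin m, (f (sweep x x' i) - f (sweep x x' (i + 1))) := by
        rw [Finset.mul_sum]
        gcongr with i
        exact le_sub_iff_add_le'.2 (h.sweep_succ_add_le hx i)
    _ = f x := by rw [htelescope, add_sub_cancel]

variable [∀ i, InnerProductSpace ℝ (E i)] {f' : (∀ i, E i) → (∀ i, E i) →L[ℝ] ℝ}

lemma IsProxBCDSweep.nonneg_fderiv_add_inner (h : IsProxBCDSweep f S σ x x')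
    (hS : ∀ i, Convex ℝ (S i)) (hf : ∀ x, HasFDerivAt f (f' x) x) {i : Fin m} {y : E i}
    (hy : y ∈ S i) :
    0 ≤ f' (sweep x x' (i + 1)) (Pi.single i (y - x' i)) + σ * inner ℝ (x' i - x i) (y - x' i) := by
  have hblock : HasFDerivAt (fun y => f (Function.update (sweep x x' i) i y))
      ((f' (sweep x x' (i + 1))) ∘L (.single ℝ E i)) (x' i) := by
    have houter := hf (Function.update (sweep x x' i) i (x' i))
    refine (houter.comp (x' i) (hasFDerivAt_update _ _)).congr_fderiv ?_
    rw [update_sweep_succ,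
      (hasFDerivAt_single 0).unique (ContinuousLinearMap.single ℝ E i).hasFDerivAt]
  have hprox := ((hasFDerivAt_id (𝕜 := ℝ) (x' i)).sub_const (x i)).norm_sq.const_mul (σ / 2)
  have hfirst := (h i).2.localize.hasFDerivWithinAt_nonneg (hblock.add hprox).hasFDerivWithinAt
    (sub_mem_posTangentConeAt_of_segment_subset ((hS i).segment_subset (h i).1 hy))
  convert hfirst using 1
  simp only [_root_.add_apply, _root_.smul_apply, ContinuousLinearMap.comp_apply,
    ContinuousLinearMap.comp_id, ContinuousLinearMap.single_apply, coe_innerSL_apply, id_eq,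
    nsmul_eq_mul, Nat.cast_ofNat, smul_eq_mul]
  ring

lemma IsProxBCDSweep.isApproxStationary (h : IsProxBCDSweep f S σ x x') (hσ : 0 ≤ σ)
    (hS : ∀ i, Convex ℝ (S i)) (hf : ∀ x, HasFDerivAt f (f' x) x) {L : NNReal}
    (hL : LipschitzWith L f') :
    IsApproxStationary (Set.univ.pi S) (f' x') (m * (L + σ) * dist x' x) x' := by
  intro y hy
  have hblock : ∀ i, -((L + σ) * dist x' x * ‖y - x'‖) ≤ f' x' (Pi.single i (y i - x' i)) := by
    intro i
    have hd : ‖y i - x' i‖ ≤ ‖y - x'‖ := norm_le_pi_norm (y - x') i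
    have hmove : ‖x' i - x i‖ ≤ dist x' x := by
      simpa [dist_eq_norm] using norm_le_pi_norm (x' - x) i
    have hgrad : ‖f' (sweep x x' (i + 1)) - f' x'‖ ≤ L * dist x' x := by
      grw [hL.norm_sub_le, ← dist_eq_norm, dist_comm, dist_sweep_le]
    have hlip : (f' (sweep x x' (i + 1)) - f' x') (Pi.single i (y i - x' i)) ≤
        L * dist x' x * ‖y - x'‖ := by
      refine (Real.le_norm_self _).trans ((ContinuousLinearMap.le_opNorm _ _).trans ?_)
      rw [Pi.norm_single]
      gcongr
    have hprox : inner ℝ (x' i - x i) (y i - x' i) ≤ dist x' x * ‖y - x'‖ := by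
      grw [real_inner_le_norm, hmove, hd]
    rw [_root_.sub_apply] at hlip
    nlinarith [h.nonneg_fderiv_add_inner hS hf (hy i trivial)]
  calc -(m * (L + σ) * dist x' x * ‖y - x'‖)
      = ∑ _i : Fin m, -((L + σ) * dist x' x * ‖y - x'‖) := by
        rw [sum_const, card_univ, Fintype.card_fin, nsmul_eq_mul]
        ring
    _ ≤ ∑ i, f' x' (Pi.single i (y i - x' i)) := by
        gcongr with i
        exact hblock i
    _ = f' x' (y - x') := by
        rw [← map_sum]
        exact congrArg _ (Finset.univ_sum_single (y - x'))

lemma IsApproxStationary.nonneg_single {g : (∀ i, E i) →L[ℝ] ℝ}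
    (h : IsApproxStationary (Set.univ.pi S) g 0 x) (hx : x ∈ Set.univ.pi S) {i : Fin m} {y : E i}
    (hy : y ∈ S i) : 0 ≤ g (Pi.single i (y - x i)) := by
  have hupdate : Function.update x i y - x = Pi.single i (y - x i) := by
    ext j
    rcases eq_or_ne j i with rfl | hj
    · simp
    · simp [hj]
  have hmem : Function.update x i y ∈ Set.univ.pi S :=
    (Set.update_mem_pi_iff_of_mem hx).2 fun _ => hy
  simpa [hupdate] using h _ hmem

theorem exists_tendsto_isApproxStationary_of_isProxBCDSweep [∀ i, FiniteDimensional ℝ (E i)]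
    (hS : ∀ i, IsPolyhedral (S i)) {l : (∀ i, E i) →L[ℝ] ℝ}
    {B : (∀ i, E i) →L[ℝ] (∀ i, E i) →L[ℝ] ℝ} (hB : ∀ x y, B x y = B y x) (hσ : 0 < σ)
    (hbdd : BddBelow (quadraticFun l B '' Set.univ.pi S)) {x : ℕ → ∀ i, E i}
    (hsweep : ∀ k, IsProxBCDSweep (quadraticFun l B) S σ (x k) (x (k + 1))) :
    ∃ z ∈ Set.univ.pi S, IsApproxStationary (Set.univ.pi S) (l + B z) 0 z ∧
      Tendsto x atTop (𝓝 z) := by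
  have hx : ∀ k, x (k + 1) ∈ Set.univ.pi S := fun k => (hsweep k).mem_pi
  obtain ⟨z, hz, hstat, hlim⟩ := (IsPolyhedral.pi hS).exists_tendsto_isApproxStationary
    (x := fun k => x (k + 1)) hB (half_pos hσ) (by positivity) hx
    (hbdd.mono (Set.range_subset_iff.2 fun k => Set.mem_image_of_mem _ (hx k)))
    (fun k => (hsweep (k + 1)).add_le hσ.le (hx k))
    (fun k => (hsweep (k + 1)).isApproxStationary hσ.le (fun i => (hS i).convex)
      (hasFDerivAt_quadraticFun hB) lipschitzWith_quadraticFun_deriv)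
  exact ⟨z, hz, hstat, (tendsto_add_atTop_iff_nat 1).1 hlim⟩

end ProxBCD

section PairwiseInteraction

variable {ι : Type*} [Fintype ι] {E : Type*} [NormedAddCommGroup E] [InnerProductSpace ℝ E]

/-- The linear part `x ↦ ∑ i, ⟪c, x i⟫` of a pairwise interaction energy. -/
def blockSumForm (ι : Type*) [Fintype ι] (c : E) : (ι → E) →L[ℝ] ℝ :=
  ∑ i, innerSL ℝ c ∘L .proj i

lemma blockSumForm_apply (c : E) (x : ι → E) : blockSumForm ι c x = ∑ i, inner ℝ c (x i) := by
  simp [blockSumForm]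

variable [FiniteDimensional ℝ E] [LinearOrder ι] [LocallyFiniteOrderTop ι]

/-- The symmetric bilinear form whose quadratic form is twice the pairwise interaction energy
`∑ i, ∑ j > i, ⟪x i, Q (x j)⟫` with self-adjoint kernel `Q`. -/
def interactionForm (ι : Type*) [Fintype ι] [LinearOrder ι] [LocallyFiniteOrderTop ι]
    (Q : E →ₗ[ℝ] E) : (ι → E) →L[ℝ] (ι → E) →L[ℝ] ℝ :=
  let pairForm (i j : ι) : (ι → E) →L[ℝ] (ι → E) →L[ℝ] ℝ :=
    (innerSL ℝ : E →L[ℝ] E →L[ℝ] ℝ).bilinearComp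
      (Q.toContinuousLinearMap ∘L .proj i) (.proj j)
  ∑ i, ∑ j ∈ Finset.Ioi i, (pairForm j i + pairForm i j)

lemma interactionForm_apply (Q : E →ₗ[ℝ] E) (x y : ι → E) :
    interactionForm ι Q x y =
      ∑ i, ∑ j ∈ Finset.Ioi i, (inner ℝ (Q (x j)) (y i) + inner ℝ (Q (x i)) (y j)) := by
  simp [interactionForm]

variable {Q : E →ₗ[ℝ] E}

lemma interactionForm_comm (hQ : Q.IsSymmetric) (x y : ι → E) :
    interactionForm ι Q x y = interactionForm ι Q y x := by
  have hswap : ∀ u v, inner ℝ (Q u) v = inner ℝ (Q v) u := fun u v =>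
    (hQ u v).trans (real_inner_comm _ _)
  simp only [interactionForm_apply, hswap (x _), add_comm]

lemma quadraticFun_interactionForm (hQ : Q.IsSymmetric) (c : E) (x : ι → E) :
    quadraticFun (blockSumForm ι c) (interactionForm ι Q) x =
      ∑ i, inner ℝ c (x i) + ∑ i, ∑ j ∈ Finset.Ioi i, inner ℝ (x i) (Q (x j)) := by
  have hpair : ∀ i j, inner ℝ (Q (x j)) (x i) + inner ℝ (Q (x i)) (x j) =
      2 * inner ℝ (x i) (Q (x j)) := fun i j => by
    rw [real_inner_comm, two_mul]
    exact congrArg _ (hQ (x i) (x j))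
  simp only [quadraticFun, blockSumForm_apply, interactionForm_apply, hpair, ← Finset.mul_sum]
  ring

lemma blockSumForm_add_interactionForm_single [LocallyFiniteOrderBot ι] (c : E) (x : ι → E) (i : ι)
    (d : E) : (blockSumForm ι c + interactionForm ι Q x) (Pi.single i d) =
      inner ℝ (c + ∑ j ∈ {i}ᶜ, Q (x j)) d := by
  have hblock (u : ι → E) :
      ∑ i', inner ℝ (u i') ((Pi.single i d : ι → E) i') = inner ℝ (u i) d := by
    rw [Fintype.sum_eq_single i fun i' hi' => by simp [hi'], Pi.single_eq_same]
  rw [_root_.add_apply, blockSumForm_apply, interactionForm_apply,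
    Finset.sum_sum_Ioi_add_eq_sum_sum_off_diag
      fun j i' => inner ℝ (Q (x j)) ((Pi.single i d : ι → E) i')]
  simp only [← sum_inner, inner_add_left]
  rw [hblock fun _ => c, hblock fun i' => ∑ j ∈ {i'}ᶜ, Q (x j)]

end PairwiseInteraction

section FrobeniusGeometry

open scoped Matrix.Norms.Frobenius

variable {K m : ℕ}

/-- The real inner product space structure on square matrices given by the trace inner product
`mip`. Its norm is Mathlib's Frobenius norm, so the topology is the entrywise one. -/
abbrev frobeniusInnerProductSpace : InnerProductSpace ℝ (Matrix (Fin K) (Fin K) ℝ) where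
  inner := mip
  norm_sq_eq_re_inner A := by
    rw [frobenius_norm_def, ← Real.sqrt_eq_rpow, Real.sq_sqrt (by positivity), Finset.sum_comm]
    simp [mip, trace, mul_apply, ← sq]
  conj_inner_symm A B := by
    rw [conj_trivial, mip, ← trace_transpose, transpose_mul, transpose_transpose, mip]
  add_left A B D := by simp [mip, Matrix.add_mul]
  smul_left A B r := by simp [mip]

attribute [local instance] frobeniusInnerProductSpace

lemma inner_eq_mip (A B : Matrix (Fin K) (Fin K) ℝ) : inner ℝ A B = mip A B := rfl

lemma mip_mul_mul (A B X Y : Matrix (Fin K) (Fin K) ℝ) :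
    mip (A * X * B) Y = mip X (Aᵀ * Y * Bᵀ) := by
  simp only [mip, transpose_mul, Matrix.mul_assoc]
  rw [trace_mul_comm]
  simp only [Matrix.mul_assoc]

variable {e ϱ : Fin K → ℝ} {C : Matrix (Fin K) (Fin K) ℝ} {β σ : ℝ}

lemma isPolyhedral_Sset : IsPolyhedral (Sset e ϱ) := by
  have hcont {φ : Matrix (Fin K) (Fin K) ℝ → ℝ} (hφ : IsLinearMap ℝ φ) : Continuous φ :=
    (hφ.mk' φ).continuous_of_finiteDimensional
  have heq {φ : Matrix (Fin K) (Fin K) ℝ → ℝ} (hφ : IsLinearMap ℝ φ) (c : ℝ) :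
      IsPolyhedral {W | φ W = c} := isPolyhedral_hyperplane hφ (hcont hφ) c
  have hge {φ : Matrix (Fin K) (Fin K) ℝ → ℝ} (hφ : IsLinearMap ℝ φ) (c : ℝ) :
      IsPolyhedral {W | c ≤ φ W} := isPolyhedral_halfSpace_ge hφ (hcont hφ) c
  have hrow (a) := heq (φ := fun W => (W *ᵥ e) a)
    ⟨fun V W => by simp [add_mulVec], fun r W => by simp [smul_mulVec]⟩ 1
  have hcol (a) := heq (φ := fun W => (Wᵀ *ᵥ fun j => e j * ϱ j) a)
    ⟨fun V W => by simp [add_mulVec], fun r W => by simp [smul_mulVec]⟩ (ϱ a)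
  have htrace := heq (φ := trace) ⟨trace_add, trace_smul⟩ 0
  have hentry (p : Fin K × Fin K) := hge (φ := fun W => W p.1 p.2)
    ⟨fun V W => rfl, fun r W => rfl⟩ 0
  convert (IsPolyhedral.iInter hrow).inter ((IsPolyhedral.iInter hcol).inter
    (htrace.inter (IsPolyhedral.iInter hentry))) using 1
  ext W
  simp [Sset, funext_iff]

lemma isCompact_Sset (he : ∀ a, 0 < e a) : IsCompact (Sset e ϱ) := by
  have hbox : IsCompact (Set.univ.pi fun _ : Fin K => Set.univ.pi fun b => Set.Icc 0 (e b)⁻¹) :=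
    isCompact_univ_pi fun _ => isCompact_univ_pi fun b => isCompact_Icc
  refine hbox.of_isClosed_subset isPolyhedral_Sset.isClosed ?_
  rintro W ⟨hrow, -, -, hW⟩ a - b -
  refine ⟨hW a b, ?_⟩
  rw [← one_div, le_div_iff₀ (he b), ← congrFun hrow a]
  exact Finset.single_le_sum (f := fun b => W a b * e b)
    (fun c _ => mul_nonneg (hW a c) (he c).le) (Finset.mem_univ b)

lemma bddBelow_fB_image (he : ∀ a, 0 < e a) :
    BddBelow (fB e ϱ C β '' Set.univ.pi fun _ : Fin m => Sset e ϱ) := by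
  have hcont : Continuous (fB (m := m) e ϱ C β) := by
    unfold fB fE mip
    fun_prop
  exact ((isCompact_univ_pi fun _ => isCompact_Sset he).image hcont).bddBelow

/-- The kernel `X ↦ ΞΛXΞCΞ + βX` of the pairwise interaction in `f_β`. -/
def interactionKernel (e ϱ : Fin K → ℝ) (C : Matrix (Fin K) (Fin K) ℝ) (β : ℝ) :
    Matrix (Fin K) (Fin K) ℝ →ₗ[ℝ] Matrix (Fin K) (Fin K) ℝ :=
  LinearMap.mulLeftRight ℝ (diagonal e * diagonal ϱ, diagonal e * C * diagonal e) + β • .id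

lemma interactionKernel_apply (X : Matrix (Fin K) (Fin K) ℝ) :
    interactionKernel e ϱ C β X =
      diagonal e * diagonal ϱ * X * diagonal e * C * diagonal e + β • X := by
  simp [interactionKernel, Matrix.mul_assoc]

lemma isSymmetric_interactionKernel (hC : Cᵀ = C) : (interactionKernel e ϱ C β).IsSymmetric := by
  intro X Y
  have hleft : (diagonal e * diagonal ϱ)ᵀ = diagonal e * diagonal ϱ := by
    rw [transpose_mul, diagonal_transpose, diagonal_transpose, (commute_diagonal ϱ e).eq]
  have hright : (diagonal e * C * diagonal e)ᵀ = diagonal e * C * diagonal e := by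
    simp only [transpose_mul, diagonal_transpose, hC, Matrix.mul_assoc]
  have hmove := mip_mul_mul (diagonal e * diagonal ϱ) (diagonal e * C * diagonal e) X Y
  rw [hleft, hright] at hmove
  simp only [Matrix.mul_assoc] at hmove
  simp only [interactionKernel_apply, Matrix.mul_assoc, inner_add_left, inner_add_right,
    real_inner_smul_left, real_inner_smul_right, inner_eq_mip, hmove]

lemma fB_eq_quadraticFun (hC : Cᵀ = C) :
    fB (m := m) e ϱ C β =
      quadraticFun (blockSumForm (Fin m) (diagonal ϱ * diagonal e * C * diagonal e))
        (interactionForm (Fin m) (interactionKernel e ϱ C β)) := by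
  ext Z
  rw [quadraticFun_interactionForm (isSymmetric_interactionKernel hC)]
  simp only [interactionKernel_apply, inner_add_right, inner_smul_right, Finset.sum_add_distrib,
    ← Finset.mul_sum, real_inner_comm _ (diagonal ϱ * diagonal e * C * diagonal e), ← add_assoc]
  rfl

lemma gradB_eq (Z : Fin m → Matrix (Fin K) (Fin K) ℝ) (i : Fin m) :
    gradB e ϱ C β Z i = diagonal ϱ * diagonal e * C * diagonal e +
      ∑ j ∈ {i}ᶜ, interactionKernel e ϱ C β (Z j) := by
  have hcompl : Finset.univ.erase i = ({i} : Finset (Fin m))ᶜ := by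
    ext j
    simp
  rw [gradB, hcompl]
  simp only [interactionKernel_apply, sum_add_distrib, ← Finset.smul_sum,
    (commute_diagonal ϱ e).eq]
  rw [← add_assoc, ← Finset.Ioi_disjUnion_Iio]
  simp only [Finset.sum_disjUnion]
  abel

lemma IsPBCD.isProxBCDSweep {Zseq : ℕ → Fin m → Matrix (Fin K) (Fin K) ℝ}
    (h : IsPBCD e ϱ C β σ Zseq) (k : ℕ) :
    IsProxBCDSweep (fB e ϱ C β) (fun _ => Sset e ϱ) σ (Zseq k) (Zseq (k + 1)) := by
  refine fun i => ⟨(h k i).1, isMinOn_iff.2 fun X hX => ?_⟩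
  simp only [update_sweep_eq_ite, ← real_inner_self_eq_norm_sq, inner_eq_mip]
  exact (h k i).2 X hX

theorem pbcd_exact_global_convergence_to_KKT_general (he : ∀ a, 0 < e a) (hCsym : Cᵀ = C)
    (hσ : 0 < σ) {Zseq : ℕ → Fin m → Matrix (Fin K) (Fin K) ℝ} (hPBCD : IsPBCD e ϱ C β σ Zseq) :
    ∃ Zstar, IsKKT e ϱ C β Zstar ∧ Tendsto Zseq atTop (𝓝 Zstar) := by
  have hbdd := bddBelow_fB_image (m := m) (ϱ := ϱ) (C := C) (β := β) he
  have hsweep := hPBCD.isProxBCDSweep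
  rw [fB_eq_quadraticFun hCsym] at hbdd hsweep
  obtain ⟨Z, hZ, hstat, hlim⟩ := exists_tendsto_isApproxStationary_of_isProxBCDSweep
    (fun _ => isPolyhedral_Sset) (interactionForm_comm (isSymmetric_interactionKernel hCsym)) hσ
    hbdd hsweep
  refine ⟨Z, ⟨fun i => hZ i trivial, fun i X hX => ?_⟩, hlim⟩
  rw [gradB_eq, ← inner_eq_mip, ← blockSumForm_add_interactionForm_single]
  exact hstat.nonneg_single hZ hX

end FrobeniusGeometry

/-- Theorem 3.1, part 1.
For `σ > 0`, the exact PBCD sequence started in `S^{N−1}` converges (as a whole sequence) to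
a KKT point of the penalized problem `(P_β)`. -/
theorem pbcd_exact_global_convergence_to_KKT
    (K N : ℕ) (hK : 1 ≤ K) (hN : 3 ≤ N)
    (e ϱ : Fin K → ℝ) (he : ∀ a, 0 < e a) (hϱ : ∀ a, 0 ≤ ϱ a)
    (C : Matrix (Fin K) (Fin K) ℝ) (hCsym : Cᵀ = C)
    (hC0 : ∀ a b, 0 ≤ C a b) (hCd : ∀ a, C a a = 0)
    (hS : (Sset e ϱ).Nonempty)
    (β σ : ℝ) (hβ : 0 < β) (hσ : 0 < σ)
    (Zseq : ℕ → Fin (N - 1) → Matrix (Fin K) (Fin K) ℝ)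
    (hZ0 : ∀ i, Zseq 0 i ∈ Sset e ϱ)
    (hPBCD : IsPBCD e ϱ C β σ Zseq) :
    ∃ Zstar : Fin (N - 1) → Matrix (Fin K) (Fin K) ℝ,
      IsKKT e ϱ C β Zstar ∧ Tendsto Zseq atTop (nhds Zstar) :=
  pbcd_exact_global_convergence_to_KKT_general he hCsym hσ hPBCD
end
end

section
/- (Theorem 3.1, part 2.) Let σ > 0. For every global minimizer Z* of the penalized problem (P_β) there exists ε > 0 such that: whenever the exact PBCD sequence {Z^(k)} is started from a point Z^(0) ∈ S^{N−1} with ‖Z^(0) − Z*‖_F < ε, the sequence {Z^(k)} converges to a global minimizer of (P_β). -/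
open Matrix Finset Filter Topology

noncomputable section

/-!
An exact proximal sweep decreases the objective by at least a multiple of the squared step, and it
ends at a point that is stationary up to a residual bounded by a multiple of the step. The objective
is quadratic. On the direction space of a face of the feasible polyhedron, the gradient of a
quadratic function controls the square root of its local excess over the value at `Z*`; since only
finitely many faces are involved, near `Z*` the excess after a sweep is at most a multiple of the
squared step. Together with the decrease, this bounds each step by the telescoping difference of
the square roots of consecutive excesses. Hence iterates started close enough to `Z*` never leave
the neighbourhood where these estimates hold, their path has finite length, and their limit attains
the minimum.
-/

section QuadraticFunction

variable {E F : Type*} [NormedAddCommGroup E] [NormedSpace ℝ E] [NormedAddCommGroup F]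
  [NormedSpace ℝ F]

/-- The quadratic function `x ↦ L x + B x x` on a normed space, given by its linear part `L` and a
bilinear form `B`, which is not required to be symmetric. -/
def quadFun (L : StrongDual ℝ E) (B : E →L[ℝ] E →L[ℝ] ℝ) (x : E) : ℝ := L x + B x x

/-- The derivative of `quadFun L B`, as a continuous linear form. -/
def quadGrad (L : StrongDual ℝ E) (B : E →L[ℝ] E →L[ℝ] ℝ) (x : E) : StrongDual ℝ E :=
  L + (B + B.flip) x

variable (L : StrongDual ℝ E) (B : E →L[ℝ] E →L[ℝ] ℝ)

lemma quadGrad_apply (x v : E) : quadGrad L B x v = L v + B x v + B v x := by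
  simp only [quadGrad, _root_.add_apply, ContinuousLinearMap.flip_apply, add_assoc]

lemma quadGrad_add (x v : E) : quadGrad L B (x + v) = quadGrad L B x + (B + B.flip) v := by
  simp only [quadGrad, map_add, add_assoc]

lemma quadGrad_sub (x y : E) :
    quadGrad L B x - quadGrad L B y = (B + B.flip) (x - y) := by
  rw [map_sub, quadGrad, quadGrad, add_sub_add_left_eq_sub]

lemma quadFun_add (x v : E) :
    quadFun L B (x + v) = quadFun L B x + quadFun (quadGrad L B x) B v := by
  simp only [quadFun, quadGrad_apply, map_add, _root_.add_apply]
  ring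

lemma quadGrad_quadGrad (x v : E) : quadGrad (quadGrad L B x) B v = quadGrad L B (x + v) :=
  (quadGrad_add L B x v).symm

lemma quadFun_zero : quadFun L B 0 = 0 := by simp only [quadFun, map_zero, add_zero]

lemma quadFun_comp (ι : F →L[ℝ] E) (v : F) :
    quadFun (L.comp ι) (B.bilinearComp ι ι) v = quadFun L B (ι v) := rfl

lemma quadGrad_comp (ι : F →L[ℝ] E) (v : F) :
    quadGrad (L.comp ι) (B.bilinearComp ι ι) v = (quadGrad L B (ι v)).comp ι := by
  ext w
  simp only [quadGrad_apply, ContinuousLinearMap.comp_apply, ContinuousLinearMap.bilinearComp_apply]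

lemma hasFDerivAt_quadFun (x : E) : HasFDerivAt (quadFun L B) (quadGrad L B x) x := by
  refine (L.hasFDerivAt.add (B.hasFDerivAt_of_bilinear (hasFDerivAt_id x)
    (hasFDerivAt_id x))).congr_fderiv ?_
  ext v
  simp [quadGrad_apply, add_assoc]

lemma continuous_quadFun : Continuous (quadFun L B) :=
  continuous_iff_continuousAt.2 fun x => (hasFDerivAt_quadFun L B x).continuousAt

lemma continuous_quadGrad : Continuous (quadGrad L B) :=
  continuous_const.add (B + B.flip).continuous

variable [FiniteDimensional ℝ E]

lemma exists_map_eq_norm_le_mul (T : E →L[ℝ] F) :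
    ∃ c > 0, ∀ d, ∃ x, T x = T d ∧ ‖x‖ ≤ c * ‖T d‖ := by
  have : CompleteSpace E := FiniteDimensional.complete ℝ E
  have : CompleteSpace T.range := FiniteDimensional.complete ℝ _
  obtain ⟨c, hc, hpre⟩ := T.rangeRestrict.exists_preimage_norm_le
    (LinearMap.surjective_rangeRestrict T.toLinearMap)
  refine ⟨c, hc, fun d => ?_⟩
  obtain ⟨x, hx, hx_norm⟩ := hpre ⟨T d, d, rfl⟩
  exact ⟨x, congrArg Subtype.val hx, hx_norm⟩

lemma exists_apply_self_le_mul_norm_sq (H : E →L[ℝ] E →L[ℝ] ℝ) (hH : ∀ x y, H x y = H y x) :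
    ∃ c > 0, ∀ d, H d d ≤ c * ‖H d‖ ^ 2 := by
  obtain ⟨c, hc, hpre⟩ := exists_map_eq_norm_le_mul H
  refine ⟨c, hc, fun d => ?_⟩
  obtain ⟨x, hxd, hx_norm⟩ := hpre d
  calc H d d = H d x := by rw [← hxd, hH, hxd]
    _ ≤ ‖H d‖ * ‖x‖ := (le_abs_self _).trans ((H d).le_opNorm x)
    _ ≤ ‖H d‖ * (c * ‖H d‖) := by gcongr
    _ = c * ‖H d‖ ^ 2 := by ring

-- At a critical point the gradient is `H d` and the increment `H d d / 2` for the Hessian `H`;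
-- elsewhere the gradient is locally bounded below while the increment tends to zero.
lemma quadFun_lojasiewicz (x₀ : E) :
    ∃ c > 0, ∀ᶠ x in 𝓝 x₀, quadFun L B x - quadFun L B x₀ ≤ c * ‖quadGrad L B x‖ ^ 2 := by
  by_cases hcrit : quadGrad L B x₀ = 0
  · obtain ⟨c, hc, hbound⟩ := exists_apply_self_le_mul_norm_sq (B + B.flip) fun x y => by
      simp only [_root_.add_apply, ContinuousLinearMap.flip_apply, add_comm]
    refine ⟨c / 2, by positivity, Eventually.of_forall fun x => ?_⟩
    obtain ⟨d, rfl⟩ : ∃ d, x₀ + d = x := ⟨x - x₀, add_sub_cancel _ _⟩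
    have hd := hbound d
    rw [quadFun_add, quadGrad_add, hcrit, zero_add]
    simp only [quadFun, _root_.zero_apply, _root_.add_apply,
      ContinuousLinearMap.flip_apply] at hd ⊢
    linarith
  · have hincr : Tendsto (fun x => quadFun L B x - quadFun L B x₀) (𝓝 x₀) (𝓝 0) := by
      simpa using ((continuous_quadFun L B).tendsto x₀).sub_const (quadFun L B x₀)
    have hgrad : Tendsto (fun x => ‖quadGrad L B x‖ ^ 2) (𝓝 x₀) (𝓝 (‖quadGrad L B x₀‖ ^ 2)) :=
      ((continuous_quadGrad L B).tendsto x₀).norm.pow 2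
    refine ⟨1, one_pos, ?_⟩
    filter_upwards [hincr.eventually_lt hgrad (by positivity)] with x hx
    simpa using hx.le

lemma quadFun_lojasiewicz_submodule (V : Submodule ℝ E) (x₀ : E) :
    ∃ c > 0, ∀ᶠ x in 𝓝 x₀, x - x₀ ∈ V → ∀ φ : StrongDual ℝ E,
      (∀ v ∈ V, (quadGrad L B x + φ) v = 0) →
        quadFun L B x - quadFun L B x₀ ≤ c * ‖φ‖ ^ 2 := by
  let ι := V.subtypeL
  obtain ⟨c, hc, hloj⟩ :=
    quadFun_lojasiewicz ((quadGrad L B x₀).comp ι) (B.bilinearComp ι ι) 0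
  have hshift : Tendsto (fun x => x - x₀) (𝓝 x₀) (𝓝 0) := by
    simpa using (continuous_sub_right x₀).tendsto x₀
  have hloj' := hshift.eventually (eventually_comap.1 (nhds_subtype_eq_comap (x := (0 : E)) ▸ hloj))
  refine ⟨c, hc, ?_⟩
  filter_upwards [hloj'] with x hx hxV φ hφ
  set v : V := ⟨x - x₀, hxV⟩
  have hgrad (w : V) : quadGrad ((quadGrad L B x₀).comp ι) (B.bilinearComp ι ι) v w = -φ w := by
    rw [quadGrad_comp, quadGrad_quadGrad, Submodule.subtypeL_apply, add_sub_cancel]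
    exact eq_neg_of_add_eq_zero_left (hφ w w.2)
  have hgrad_norm : ‖quadGrad ((quadGrad L B x₀).comp ι) (B.bilinearComp ι ι) v‖ ≤ ‖φ‖ :=
    ContinuousLinearMap.opNorm_le_bound _ (norm_nonneg _) fun w => by
      rw [hgrad, norm_neg]
      exact φ.le_opNorm w
  calc quadFun L B x - quadFun L B x₀
      = quadFun ((quadGrad L B x₀).comp ι) (B.bilinearComp ι ι) v - 0 := by
        rw [quadFun_comp, Submodule.subtypeL_apply, sub_zero, sub_eq_iff_eq_add', ← quadFun_add,
          add_sub_cancel]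
    _ ≤ c * ‖quadGrad ((quadGrad L B x₀).comp ι) (B.bilinearComp ι ι) v‖ ^ 2 := by
        simpa [quadFun_zero] using hx v rfl
    _ ≤ c * ‖φ‖ ^ 2 := by gcongr

end QuadraticFunction

section Polyhedron

/-- A polyhedron: the solution set of finitely many affine inequalities `c ≤ l x`, encoded by the
pairs `(l, c)`. An affine equation is encoded as two opposite inequalities. -/
def IsPolyhedron {E : Type*} [AddCommGroup E] [Module ℝ E] (P : Set E) : Prop :=
  ∃ H : Set (Module.Dual ℝ E × ℝ), H.Finite ∧ P = {x | ∀ h ∈ H, h.2 ≤ h.1 x}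

namespace IsPolyhedron

section Algebra

variable {E F : Type*} [AddCommGroup E] [Module ℝ E] [AddCommGroup F] [Module ℝ F]

lemma halfSpace (l : Module.Dual ℝ E) (c : ℝ) : IsPolyhedron {x | c ≤ l x} :=
  ⟨{(l, c)}, Set.finite_singleton _, by simp⟩

lemma iInter {ι : Type*} [Finite ι] {P : ι → Set E} (hP : ∀ i, IsPolyhedron (P i)) :
    IsPolyhedron (⋂ i, P i) := by
  choose H hfin hH using hP
  refine ⟨⋃ i, H i, Set.finite_iUnion hfin, ?_⟩
  ext x
  simp only [hH, Set.mem_iInter, Set.mem_ofPred_eq, Set.mem_iUnion]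
  exact ⟨fun hx h ⟨i, hi⟩ => hx i h hi, fun hx i h hi => hx h ⟨i, hi⟩⟩

lemma inter {P Q : Set E} (hP : IsPolyhedron P) (hQ : IsPolyhedron Q) : IsPolyhedron (P ∩ Q) := by
  rw [Set.inter_eq_iInter]
  exact iInter (Bool.forall_bool.2 ⟨hQ, hP⟩)

lemma hyperplane (l : Module.Dual ℝ E) (c : ℝ) : IsPolyhedron {x | l x = c} := by
  convert (halfSpace l c).inter (halfSpace (-l) (-c)) using 1
  ext x
  simp [le_antisymm_iff, and_comm]

lemma setOf_map_eq {ι : Type*} [Finite ι] (T : E →ₗ[ℝ] ι → ℝ) (y : ι → ℝ) :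
    IsPolyhedron {x | T x = y} := by
  simp only [funext_iff, Set.ofPred_forall]
  exact iInter fun i => hyperplane (LinearMap.proj i ∘ₗ T) (y i)

lemma preimage {P : Set F} (hP : IsPolyhedron P) (T : E →ₗ[ℝ] F) : IsPolyhedron (T ⁻¹' P) := by
  obtain ⟨H, hfin, rfl⟩ := hP
  refine ⟨(fun h => (h.1 ∘ₗ T, h.2)) '' H, hfin.image _, ?_⟩
  simp only [Set.preimage_ofPred_eq, Set.forall_mem_image, LinearMap.comp_apply]

lemma univ_pi {ι : Type*} [Finite ι] {S : ι → Set E} (hS : ∀ i, IsPolyhedron (S i)) :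
    IsPolyhedron (Set.univ.pi S) := by
  rw [Set.univ_pi_eq_iInter]
  exact iInter fun i => (hS i).preimage (LinearMap.proj (φ := fun _ => E) i)

lemma convex {P : Set E} (hP : IsPolyhedron P) : Convex ℝ P := by
  obtain ⟨H, -, rfl⟩ := hP
  simp only [Set.ofPred_forall]
  exact convex_iInter₂ fun h _ => convex_halfSpace_ge h.1.isLinear h.2

end Algebra

variable {E : Type*} [NormedAddCommGroup E] [NormedSpace ℝ E] [FiniteDimensional ℝ E]

lemma isClosed {P : Set E} (hP : IsPolyhedron P) : IsClosed P := by
  obtain ⟨H, -, rfl⟩ := hP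
  simp only [Set.ofPred_forall]
  exact isClosed_biInter fun h _ => isClosed_le continuous_const h.1.continuous_of_finiteDimensional

end IsPolyhedron

section Face

variable {E : Type*} [AddCommGroup E] [Module ℝ E]

/-- The constraints among `H` that hold with equality at `x`. -/
def activeConstraints (H : Set (Module.Dual ℝ E × ℝ)) (x : E) : Set (Module.Dual ℝ E × ℝ) :=
  {h ∈ H | h.1 x = h.2}

/-- The directions along which every constraint in `A` stays constant. If `A` is the set of
constraints active at a point `x` of a polyhedron, this is the direction space of the face
having `x` in its relative interior. -/
def faceDirection (A : Set (Module.Dual ℝ E × ℝ)) : Submodule ℝ E :=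
  ⨅ h ∈ A, LinearMap.ker h.1

lemma mem_faceDirection {A : Set (Module.Dual ℝ E × ℝ)} {v : E} :
    v ∈ faceDirection A ↔ ∀ h ∈ A, h.1 v = 0 := by
  simp only [faceDirection, Submodule.mem_iInf, LinearMap.mem_ker]

variable {H : Set (Module.Dual ℝ E × ℝ)} {x v : E}

lemma exists_pos_add_smul_mem (hH : H.Finite) (hx : ∀ h ∈ H, h.2 ≤ h.1 x)
    (hv : v ∈ faceDirection (activeConstraints H x)) :
    ∃ t > 0, ∀ h ∈ H, h.2 ≤ h.1 (x + (t : ℝ) • v) := by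
  have hfeas : ∀ᶠ t : ℝ in 𝓝[>] 0, ∀ h ∈ H, h.2 ≤ h.1 (x + t • v) := by
    refine (eventually_all_finite hH).2 fun h hh => ?_
    rcases (hx h hh).eq_or_lt with hactive | hslack
    · have hhv := mem_faceDirection.1 hv h ⟨hh, hactive.symm⟩
      simp [hhv, hactive]
    · have hcont : Continuous fun t : ℝ => h.1 x + t * h.1 v := by fun_prop
      have := (hcont.tendsto 0).eventually_const_lt (by simpa using hslack)
      filter_upwards [nhdsWithin_le_nhds this] with t ht
      simpa using ht.le
  obtain ⟨t, ht, ht0⟩ := (hfeas.and self_mem_nhdsWithin).exists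
  exact ⟨t, ht0, ht⟩

lemma apply_eq_zero_of_nonneg_on_face (hH : H.Finite) (hx : ∀ h ∈ H, h.2 ≤ h.1 x)
    {ψ : Module.Dual ℝ E} (hψ : ∀ y, (∀ h ∈ H, h.2 ≤ h.1 y) → 0 ≤ ψ (y - x))
    (hv : v ∈ faceDirection (activeConstraints H x)) : ψ v = 0 := by
  have hnonneg : ∀ w ∈ faceDirection (activeConstraints H x), 0 ≤ ψ w := by
    intro w hw
    obtain ⟨t, ht, hmem⟩ := exists_pos_add_smul_mem hH hx hw
    have := hψ _ hmem
    rw [add_sub_cancel_left, map_smul, smul_eq_mul] at this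
    exact nonneg_of_mul_nonneg_right this ht
  have hneg := hnonneg (-v) (neg_mem hv)
  rw [map_neg] at hneg
  exact le_antisymm (neg_nonneg.1 hneg) (hnonneg v hv)

end Face

section ErrorBound

variable {E : Type*} [NormedAddCommGroup E] [NormedSpace ℝ E] [FiniteDimensional ℝ E]
  {H : Set (Module.Dual ℝ E × ℝ)}

lemma eventually_sub_mem_faceDirection (hH : H.Finite) (x₀ : E) :
    ∀ᶠ x in 𝓝 x₀, x - x₀ ∈ faceDirection (activeConstraints H x) := by
  have hinactive : ∀ᶠ x in 𝓝 x₀, ∀ h ∈ H, h.1 x₀ ≠ h.2 → h.1 x ≠ h.2 := by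
    simp only [eventually_all_finite hH, eventually_imp_distrib_left]
    exact fun h _ hne => h.1.continuous_of_finiteDimensional.continuousAt.eventually_ne hne
  filter_upwards [hinactive] with x hx
  refine mem_faceDirection.2 fun h hh => ?_
  rw [map_sub, hh.2, not_imp_not.1 (hx h hh.1) hh.2, sub_self]

-- Only finitely many faces meet a neighbourhood of `x₀`, and a stationary point is critical for
-- the restriction of the function to its own face.
theorem IsPolyhedron.quadFun_sub_le_mul_norm_sq {P : Set E} (hP : IsPolyhedron P)
    (L : StrongDual ℝ E) (B : E →L[ℝ] E →L[ℝ] ℝ) (x₀ : E) :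
    ∃ c > 0, ∀ᶠ x in 𝓝 x₀, x ∈ P → ∀ φ : StrongDual ℝ E,
      (∀ y ∈ P, 0 ≤ (quadGrad L B x + φ) (y - x)) →
        quadFun L B x - quadFun L B x₀ ≤ c * ‖φ‖ ^ 2 := by
  obtain ⟨H, hH, rfl⟩ := hP
  choose c _ hloj using fun A : Set (Module.Dual ℝ E × ℝ) =>
    quadFun_lojasiewicz_submodule L B (faceDirection A) x₀
  obtain ⟨C, hC⟩ := (hH.finite_subsets.image c).bddAbove
  refine ⟨max C 1, by positivity, ?_⟩
  filter_upwards [eventually_sub_mem_faceDirection hH x₀,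
    (eventually_all_finite hH.finite_subsets).2 fun A _ => hloj A] with x hdir hface hx φ hφ
  have hA : activeConstraints H x ⊆ H := Set.sep_subset _ _
  calc quadFun L B x - quadFun L B x₀ ≤ c (activeConstraints H x) * ‖φ‖ ^ 2 :=
        hface _ hA hdir φ fun v hv =>
          apply_eq_zero_of_nonneg_on_face hH hx (ψ := (quadGrad L B x + φ).toLinearMap) hφ hv
    _ ≤ max C 1 * ‖φ‖ ^ 2 := by
        gcongr
        exact (hC (Set.mem_image_of_mem c hA)).trans (le_max_left _ _)

end ErrorBound

end Polyhedron

section DescentSequence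

variable {a c : ℝ}

lemma sqrt_add_sub_sqrt_pos (ha : 0 < a) (hc : 0 ≤ c) : 0 < √(c + a) - √c :=
  sub_pos.2 (Real.sqrt_lt_sqrt hc (lt_add_of_pos_right c ha))

lemma mul_le_sqrt_of_descent {d D D' : ℝ} (ha : 0 ≤ a) (hc : 0 ≤ c) (hD' : 0 ≤ D')
    (hdesc : D' + a * d ^ 2 ≤ D) : (√(c + a) - √c) * d ≤ √D := by
  have hle : √c ≤ √(c + a) := Real.sqrt_le_sqrt (le_add_of_nonneg_right ha)
  have hsq : (√(c + a) - √c) ^ 2 ≤ a := by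
    nlinarith [Real.sq_sqrt hc, Real.sq_sqrt (add_nonneg hc ha), Real.sqrt_nonneg c]
  refine Real.le_sqrt_of_sq_le ?_
  calc ((√(c + a) - √c) * d) ^ 2 = (√(c + a) - √c) ^ 2 * d ^ 2 := mul_pow _ _ _
    _ ≤ a * d ^ 2 := by gcongr
    _ ≤ D := by linarith

-- With `κ = √(c + a) - √c` one has `κ ^ 2 + 2 * κ * √c = a`.
lemma mul_le_sqrt_sub_sqrt_of_descent {d D D' : ℝ} (ha : 0 ≤ a) (hc : 0 ≤ c) (hd : 0 ≤ d)
    (hD' : 0 ≤ D') (hdesc : D' + a * d ^ 2 ≤ D) (hgap : D' ≤ c * d ^ 2) :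
    (√(c + a) - √c) * d ≤ √D - √D' := by
  have hκ : 0 ≤ √(c + a) - √c := sub_nonneg.2 (Real.sqrt_le_sqrt (le_add_of_nonneg_right ha))
  have hroot : √D' ≤ √c * d := by
    rw [← Real.sqrt_sq hd, ← Real.sqrt_mul hc]
    exact Real.sqrt_le_sqrt hgap
  have hκa : (√(c + a) - √c) ^ 2 + 2 * (√(c + a) - √c) * √c = a := by
    linear_combination Real.sq_sqrt (add_nonneg hc ha) - Real.sq_sqrt hc
  rw [le_sub_iff_add_le]
  refine Real.le_sqrt_of_sq_le ?_
  calc ((√(c + a) - √c) * d + √D') ^ 2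
      = ((√(c + a) - √c) * d) ^ 2 + 2 * ((√(c + a) - √c) * d) * √D' + D' := by
        rw [add_sq, Real.sq_sqrt hD']
    _ ≤ ((√(c + a) - √c) * d) ^ 2 + 2 * ((√(c + a) - √c) * d) * (√c * d) + D' := by gcongr
    _ = D' + a * d ^ 2 := by linear_combination d ^ 2 * hκa
    _ ≤ D := hdesc

variable {X : Type*} [PseudoMetricSpace X] {x₀ : X} {δ : ℝ} {z : ℕ → X} {D : ℕ → ℝ}

-- The potential `dist (z k) x₀ + √(D k) / (√(c + a) - √c)` does not increase with `k`.
lemma dist_lt_of_descent (ha : 0 < a) (hc : 0 ≤ c) (hnonneg : ∀ k, 0 ≤ D k)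
    (hdesc : ∀ k, D (k + 1) + a * dist (z k) (z (k + 1)) ^ 2 ≤ D k)
    (hgap : ∀ k, dist (z (k + 1)) x₀ < δ →
      D (k + 1) ≤ c * dist (z k) (z (k + 1)) ^ 2)
    (hstart : dist (z 0) x₀ + √(D 0) / (√(c + a) - √c) < δ) (k : ℕ) :
    dist (z k) x₀ < δ := by
  have hκ := sqrt_add_sub_sqrt_pos ha hc
  suffices hpot : dist (z k) x₀ + √(D k) / (√(c + a) - √c) < δ from
    (le_add_of_nonneg_right (by positivity)).trans_lt hpot
  induction k with
  | zero => exact hstart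
  | succ k ih =>
    have htri : dist (z (k + 1)) x₀ ≤ dist (z k) x₀ + dist (z k) (z (k + 1)) :=
      (dist_triangle_left _ _ (z k)).trans_eq (add_comm _ _)
    have hstep : dist (z k) (z (k + 1)) ≤ √(D k) / (√(c + a) - √c) :=
      (le_div_iff₀' hκ).2 (mul_le_sqrt_of_descent ha.le hc (hnonneg _) (hdesc k))
    have hnear : dist (z (k + 1)) x₀ < δ := by linarith
    have hdecr : dist (z k) (z (k + 1)) ≤
        √(D k) / (√(c + a) - √c) - √(D (k + 1)) / (√(c + a) - √c) := by
      rw [← sub_div]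
      exact (le_div_iff₀' hκ).2 (mul_le_sqrt_sub_sqrt_of_descent ha.le hc dist_nonneg
        (hnonneg _) (hdesc k) (hgap k hnear))
    linarith

lemma summable_dist_of_descent (ha : 0 < a) (hc : 0 ≤ c) (hnonneg : ∀ k, 0 ≤ D k)
    (hdesc : ∀ k, D (k + 1) + a * dist (z k) (z (k + 1)) ^ 2 ≤ D k)
    (hgap : ∀ k, D (k + 1) ≤ c * dist (z k) (z (k + 1)) ^ 2) :
    Summable fun k => dist (z k) (z (k + 1)) := by
  have hκ := sqrt_add_sub_sqrt_pos ha hc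
  refine (summable_mul_left_iff hκ.ne').1 ?_
  refine summable_of_sum_range_le (c := √(D 0)) (fun k => by positivity) fun n => ?_
  calc ∑ k ∈ range n, (√(c + a) - √c) * dist (z k) (z (k + 1))
      ≤ ∑ k ∈ range n, (√(D k) - √(D (k + 1))) :=
        sum_le_sum fun k _ => mul_le_sqrt_sub_sqrt_of_descent ha.le hc dist_nonneg
          (hnonneg _) (hdesc k) (hgap k)
    _ = √(D 0) - √(D n) := sum_range_sub' _ n
    _ ≤ √(D 0) := sub_le_self _ (Real.sqrt_nonneg _)

lemma tendsto_zero_of_le_mul_dist_sq (hnonneg : ∀ k, 0 ≤ D k)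
    (hgap : ∀ k, D (k + 1) ≤ c * dist (z k) (z (k + 1)) ^ 2)
    (hsum : Summable fun k => dist (z k) (z (k + 1))) :
    Tendsto D atTop (𝓝 0) := by
  have hlim := (hsum.tendsto_atTop_zero.pow 2).const_mul c
  rw [zero_pow two_ne_zero, mul_zero] at hlim
  exact (tendsto_add_atTop_iff_nat 1).1 (squeeze_zero (fun k => hnonneg _) hgap hlim)

theorem eventually_exists_tendsto_isMinOn_of_descent [CompleteSpace X] {f : X → ℝ}
    {S : Set X} {R : X → X → Prop} (hf : Continuous f) (hS : IsClosed S) (hmin : IsMinOn f S x₀)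
    (ha : 0 < a) (hc : 0 ≤ c) (hmem : ∀ x y, R x y → y ∈ S)
    (hdesc : ∀ x ∈ S, ∀ y, R x y → f y + a * dist x y ^ 2 ≤ f x)
    (hgap : ∀ᶠ y in 𝓝 x₀, ∀ x, R x y → f y - f x₀ ≤ c * dist x y ^ 2) :
    ∀ᶠ x in 𝓝 x₀, x ∈ S → ∀ z : ℕ → X, z 0 = x → (∀ k, R (z k) (z (k + 1))) →
      ∃ y ∈ S, IsMinOn f S y ∧ Tendsto z atTop (𝓝 y) := by
  obtain ⟨δ, hδ, hgap⟩ := Metric.eventually_nhds_iff.1 hgap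
  have hpot : Continuous fun x => dist x x₀ + √(f x - f x₀) / (√(c + a) - √c) := by fun_prop
  filter_upwards [(hpot.tendsto x₀).eventually_lt_const (u := δ) (by simpa using hδ)]
    with x hx hxS z hz hR
  have hzS (k : ℕ) : z k ∈ S := by
    cases k with
    | zero => exact hz ▸ hxS
    | succ k => exact hmem _ _ (hR k)
  have hnonneg (k : ℕ) : 0 ≤ f (z k) - f x₀ := sub_nonneg.2 (hmin (hzS k))
  have hdesc' (k : ℕ) : f (z (k + 1)) - f x₀ + a * dist (z k) (z (k + 1)) ^ 2 ≤ f (z k) - f x₀ := by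
    linarith [hdesc _ (hzS k) _ (hR k)]
  have hnear := dist_lt_of_descent (D := fun k => f (z k) - f x₀) ha hc hnonneg hdesc'
    (fun k hk => hgap hk _ (hR k)) (hz ▸ hx)
  have hgap' (k : ℕ) : f (z (k + 1)) - f x₀ ≤ c * dist (z k) (z (k + 1)) ^ 2 :=
    hgap (hnear (k + 1)) _ (hR k)
  have hsum := summable_dist_of_descent (D := fun k => f (z k) - f x₀) ha hc hnonneg hdesc' hgap'
  obtain ⟨y, hy⟩ := cauchySeq_tendsto_of_complete (cauchySeq_of_summable_dist hsum)
  have hfy : f y = f x₀ := sub_eq_zero.1 <| tendsto_nhds_unique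
    (((hf.tendsto y).comp hy).sub_const _) (tendsto_zero_of_le_mul_dist_sq hnonneg hgap' hsum)
  exact ⟨y, hS.mem_of_tendsto hy (Eventually.of_forall hzS),
    fun w hw => hfy.trans_le (hmin hw), hy⟩

end DescentSequence

section BlockDescent

section PartialSweep

variable {E : Type*} {m : ℕ}

/-- The block vector reached by a sweep from `Z` to `Z'` after its first `k` blocks have been
updated. -/
def partialSweep (Z Z' : Fin m → E) (k : ℕ) : Fin m → E :=
  fun j => if (j : ℕ) < k then Z' j else Z j

variable (Z Z' : Fin m → E)

lemma partialSweep_zero : partialSweep Z Z' 0 = Z := rfl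

lemma partialSweep_last : partialSweep Z Z' m = Z' := funext fun j => if_pos j.2

lemma update_partialSweep (i : Fin m) (X : E) :
    Function.update (partialSweep Z Z' i) i X =
      fun j => if j < i then Z' j else if j = i then X else Z j := by
  ext j
  rcases lt_trichotomy j i with h | rfl | h
  · simp [partialSweep, h, h.ne]
  · simp
  · simp [partialSweep, h.ne', h.not_gt]

lemma update_partialSweep_old (i : Fin m) :
    Function.update (partialSweep Z Z' i) i (Z i) = partialSweep Z Z' i :=
  Function.update_eq_self_iff.2 (if_neg (lt_irrefl _)).symm

lemma update_partialSweep_new (i : Fin m) :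
    Function.update (partialSweep Z Z' i) i (Z' i) = partialSweep Z Z' (i + 1) := by
  rw [update_partialSweep]
  ext j
  simp only [partialSweep, Nat.lt_succ_iff_lt_or_eq, Fin.val_inj, Fin.val_fin_lt]
  grind

end PartialSweep

section Pi

variable {ι E : Type*} [Fintype ι] [SeminormedAddCommGroup E]

lemma norm_partialSweep_sub_le {m : ℕ} (Z Z' : Fin m → E) (k : ℕ) :
    ‖partialSweep Z Z' k - Z'‖ ≤ ‖Z' - Z‖ := by
  refine (pi_norm_le_iff_of_nonneg (norm_nonneg _)).2 fun j => ?_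
  simp only [partialSweep, Pi.sub_apply]
  split_ifs
  · simp
  · rw [norm_sub_rev]
    exact norm_le_pi_norm (Z' - Z) j

lemma pi_norm_sq_le_sum_norm_sq (v : ι → E) : ‖v‖ ^ 2 ≤ ∑ i, ‖v i‖ ^ 2 := by
  refine (Real.le_sqrt (norm_nonneg v) (by positivity)).1 ?_
  refine (pi_norm_le_iff_of_nonneg (Real.sqrt_nonneg _)).2 fun i => Real.le_sqrt_of_sq_le ?_
  exact single_le_sum (f := fun i => ‖v i‖ ^ 2) (fun j _ => by positivity) (mem_univ i)

end Pi

variable {E : Type*} [NormedAddCommGroup E] [NormedSpace ℝ E] {m : ℕ}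

/-- The block vector `Z'` arises from `Z` by one exact sweep of proximal block coordinate descent
for `f` over `∏ i, S i`: the blocks are updated in increasing order, each one minimizing `f` plus
the proximal term `p (X - Z i) (X - Z i)` while the other blocks keep their current value. -/
def IsProxSweep (f : (Fin m → E) → ℝ) (p : E →L[ℝ] E →L[ℝ] ℝ) (S : Fin m → Set E)
    (Z Z' : Fin m → E) : Prop :=
  ∀ i, Z' i ∈ S i ∧
    IsMinOn (fun X => f (Function.update (partialSweep Z Z' i) i X) + p (X - Z i) (X - Z i))
      (S i) (Z' i)

variable {f : (Fin m → E) → ℝ} {p : E →L[ℝ] E →L[ℝ] ℝ} {S : Fin m → Set E} {Z Z' : Fin m → E}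

lemma IsProxSweep.mem (h : IsProxSweep f p S Z Z') : Z' ∈ Set.univ.pi S := fun i _ => (h i).1

lemma IsProxSweep.add_sum_le (h : IsProxSweep f p S Z Z') (hZ : Z ∈ Set.univ.pi S) :
    f Z' + ∑ i, p (Z' i - Z i) (Z' i - Z i) ≤ f Z := by
  have hblock (i : Fin m) : p (Z' i - Z i) (Z' i - Z i) ≤
      f (partialSweep Z Z' i) - f (partialSweep Z Z' (i + 1)) := by
    have hmin := isMinOn_iff.1 (h i).2 (Z i) (hZ i trivial)
    simp only [update_partialSweep_old, update_partialSweep_new, sub_self, map_zero,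
      add_zero] at hmin
    linarith
  have htele : ∑ i, p (Z' i - Z i) (Z' i - Z i) ≤ f Z - f Z' :=
    calc ∑ i, p (Z' i - Z i) (Z' i - Z i)
        ≤ ∑ i : Fin m, (f (partialSweep Z Z' i) - f (partialSweep Z Z' (i + 1))) :=
          sum_le_sum fun i _ => hblock i
      _ = f Z - f Z' := by
          rw [Fin.sum_univ_eq_sum_range fun k =>
            f (partialSweep Z Z' k) - f (partialSweep Z Z' (k + 1)), sum_range_sub',
            partialSweep_zero, partialSweep_last]
  linarith

lemma IsProxSweep.add_mul_dist_sq_le (h : IsProxSweep f p S Z Z') (hZ : Z ∈ Set.univ.pi S) {a : ℝ}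
    (ha : 0 ≤ a) (hp : ∀ u, a * ‖u‖ ^ 2 ≤ p u u) : f Z' + a * dist Z Z' ^ 2 ≤ f Z := by
  have hsum : a * dist Z Z' ^ 2 ≤ ∑ i, p (Z' i - Z i) (Z' i - Z i) :=
    calc a * dist Z Z' ^ 2 ≤ a * ∑ i, ‖Z' i - Z i‖ ^ 2 := by
          rw [dist_eq_norm_sub']
          gcongr
          exact pi_norm_sq_le_sum_norm_sq (Z' - Z)
      _ ≤ ∑ i, p (Z' i - Z i) (Z' i - Z i) := by
          rw [mul_sum]
          exact sum_le_sum fun i _ => hp _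
  linarith [h.add_sum_le hZ]

lemma apply_sub_nonneg_of_isMinOn {g : E → ℝ} {g' : StrongDual ℝ E} {C : Set E} {x y : E}
    (hC : Convex ℝ C) (hmin : IsMinOn g C x) (hg : HasFDerivAt g g' x) (hx : x ∈ C) (hy : y ∈ C) :
    0 ≤ g' (y - x) :=
  hmin.localize.hasFDerivWithinAt_nonneg hg.hasFDerivWithinAt
    (sub_mem_posTangentConeAt_of_segment_subset (hC.segment_subset hx hy))

section DualOfPi

variable {ι : Type*} [Fintype ι]

lemma norm_comp_single_le [DecidableEq ι] (A : StrongDual ℝ (ι → E)) (i : ι) :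
    ‖A.comp (.single ℝ (fun _ => E) i)‖ ≤ ‖A‖ :=
  ContinuousLinearMap.opNorm_le_bound (A.comp (.single ℝ (fun _ => E) i)) (norm_nonneg _)
    fun w => A.le_opNorm_of_le (Pi.norm_single (G := fun _ => E) w).le

lemma norm_sum_comp_proj_le {ψ : ι → StrongDual ℝ E} {c : ℝ} (hψ : ∀ i, ‖ψ i‖ ≤ c) :
    ‖∑ i, (ψ i).comp (.proj i : (ι → E) →L[ℝ] E)‖ ≤ Fintype.card ι * c := by
  have hblock (i : ι) : ‖(ψ i).comp (.proj i : (ι → E) →L[ℝ] E)‖ ≤ c :=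
    (ContinuousLinearMap.opNorm_le_bound ((ψ i).comp (.proj i : (ι → E) →L[ℝ] E)) (norm_nonneg _)
      fun w => (ψ i).le_opNorm_of_le (norm_le_pi_norm w i)).trans (hψ i)
  simpa using norm_sum_le_of_le univ fun i _ => hblock i

end DualOfPi

lemma exists_quadFun_eq_pairInteraction {ι : Type*} [Fintype ι] [Preorder ι]
    [LocallyFiniteOrderTop ι] (L : StrongDual ℝ E) (b : E →L[ℝ] E →L[ℝ] ℝ) :
    ∃ (L' : StrongDual ℝ (ι → E)) (B : (ι → E) →L[ℝ] (ι → E) →L[ℝ] ℝ),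
      ∀ Z, quadFun L' B Z = ∑ i, L (Z i) + ∑ i, ∑ j ∈ Ioi i, b (Z i) (Z j) := by
  refine ⟨∑ i, L.comp (.proj i), ∑ i, ∑ j ∈ Ioi i, b.bilinearComp (.proj i) (.proj j),
    fun Z => ?_⟩
  simp [quadFun]

section QuadraticObjective

/-- The derivative, at its solution `Z' i`, of the objective of the `i`-th block problem in a
proximal sweep from `Z` to `Z'` for the function `quadFun L B`. -/
def blockGrad (L : StrongDual ℝ (Fin m → E)) (B : (Fin m → E) →L[ℝ] (Fin m → E) →L[ℝ] ℝ)
    (p : E →L[ℝ] E →L[ℝ] ℝ) (Z Z' : Fin m → E) (i : Fin m) : StrongDual ℝ E :=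
  (quadGrad L B (partialSweep Z Z' (i + 1))).comp (.single ℝ (fun _ => E) i) +
    (p + p.flip) (Z' i - Z i)

variable {L : StrongDual ℝ (Fin m → E)} {B : (Fin m → E) →L[ℝ] (Fin m → E) →L[ℝ] ℝ}

lemma hasFDerivAt_blockObjective (i : Fin m) :
    HasFDerivAt (fun X => quadFun L B (Function.update (partialSweep Z Z' i) i X) +
      p (X - Z i) (X - Z i)) (blockGrad L B p Z Z' i) (Z' i) := by
  have hupdate : HasFDerivAt (Function.update (partialSweep Z Z' i) i)
      (.single ℝ (fun _ => E) i) (Z' i) := by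
    refine (hasFDerivAt_update _ _).congr_fderiv ?_
    ext w j
    rcases eq_or_ne j i with rfl | hji <;> simp [*]
  have henergy := (hasFDerivAt_quadFun L B _).comp (Z' i) hupdate
  rw [update_partialSweep_new] at henergy
  have hprox : HasFDerivAt (fun X => p (X - Z i) (X - Z i)) ((p + p.flip) (Z' i - Z i)) (Z' i) := by
    have hshift := (hasFDerivAt_id (𝕜 := ℝ) (Z' i)).sub_const (Z i)
    refine (p.hasFDerivAt_of_bilinear hshift hshift).congr_fderiv ?_
    ext w
    simp
  exact henergy.add hprox

lemma IsProxSweep.blockGrad_nonneg (h : IsProxSweep (quadFun L B) p S Z Z') {i : Fin m}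
    (hS : Convex ℝ (S i)) {X : E} (hX : X ∈ S i) : 0 ≤ blockGrad L B p Z Z' i (X - Z' i) :=
  apply_sub_nonneg_of_isMinOn hS (h i).2 (hasFDerivAt_blockObjective i) (h i).1 hX

-- The `i`-th block problem sees the old values of the blocks after `i`.
lemma norm_blockGrad_sub_le (i : Fin m) :
    ‖blockGrad L B p Z Z' i - (quadGrad L B Z').comp (.single ℝ (fun _ => E) i)‖ ≤
      (‖B + B.flip‖ + ‖p + p.flip‖) * dist Z Z' := by
  rw [blockGrad, add_sub_right_comm, ← ContinuousLinearMap.sub_comp, quadGrad_sub,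
    dist_eq_norm_sub', add_mul]
  exact norm_add_le_of_le
    ((norm_comp_single_le _ i).trans
      ((B + B.flip).le_opNorm_of_le (norm_partialSweep_sub_le Z Z' _)))
    ((p + p.flip).le_opNorm_of_le (norm_le_pi_norm (Z' - Z) i))

lemma IsProxSweep.exists_stationarity_residual (h : IsProxSweep (quadFun L B) p S Z Z')
    (hS : ∀ i, Convex ℝ (S i)) :
    ∃ φ : StrongDual ℝ (Fin m → E),
      ‖φ‖ ≤ m * ((‖B + B.flip‖ + ‖p + p.flip‖) * dist Z Z') ∧
      ∀ Y ∈ Set.univ.pi S, 0 ≤ (quadGrad L B Z' + φ) (Y - Z') := by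
  refine ⟨∑ i, (blockGrad L B p Z Z' i - (quadGrad L B Z').comp (.single ℝ (fun _ => E) i)).comp
    (.proj i), ?_, fun Y hY => ?_⟩
  · simpa only [Fintype.card_fin] using norm_sum_comp_proj_le
      fun i => norm_blockGrad_sub_le (L := L) (B := B) (p := p) (Z := Z) (Z' := Z') i
  · calc 0 ≤ ∑ i, blockGrad L B p Z Z' i ((Y - Z') i) :=
          sum_nonneg fun i _ => h.blockGrad_nonneg (hS i) (hY i trivial)
      _ = _ := by
          rw [_root_.add_apply, ← ContinuousLinearMap.sum_comp_single, _root_.sum_apply,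
            ← sum_add_distrib]
          simp only [ContinuousLinearMap.comp_apply, ContinuousLinearMap.proj_apply,
            _root_.sub_apply, add_sub_cancel]

variable [FiniteDimensional ℝ E]

theorem eventually_exists_tendsto_isMinOn_of_isProxSweep (hS : ∀ i, IsPolyhedron (S i))
    (hp : IsCoercive p) {Zstar : Fin m → E}
    (hmin : IsMinOn (quadFun L B) (Set.univ.pi S) Zstar) :
    ∀ᶠ Z₀ in 𝓝 Zstar, Z₀ ∈ Set.univ.pi S → ∀ Z : ℕ → Fin m → E, Z 0 = Z₀ →
      (∀ k, IsProxSweep (quadFun L B) p S (Z k) (Z (k + 1))) →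
        ∃ Zopt ∈ Set.univ.pi S, IsMinOn (quadFun L B) (Set.univ.pi S) Zopt ∧
          Tendsto Z atTop (𝓝 Zopt) := by
  obtain ⟨a, ha, hp⟩ := hp
  have hpoly := IsPolyhedron.univ_pi hS
  obtain ⟨c, hc, hgap⟩ := hpoly.quadFun_sub_le_mul_norm_sq L B Zstar
  have : CompleteSpace E := FiniteDimensional.complete ℝ E
  refine eventually_exists_tendsto_isMinOn_of_descent (R := IsProxSweep (quadFun L B) p S)
    (c := c * (m * (‖B + B.flip‖ + ‖p + p.flip‖)) ^ 2) (continuous_quadFun L B) hpoly.isClosed hmin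
    ha (by positivity) (fun _ _ h => h.mem)
    (fun Z hZ Z' h => h.add_mul_dist_sq_le hZ ha.le fun u => by simpa [sq, mul_assoc] using hp u) ?_
  filter_upwards [hgap] with Z' hgap Z h
  obtain ⟨φ, hφ_norm, hφ⟩ := h.exists_stationarity_residual fun i => (hS i).convex
  calc quadFun L B Z' - quadFun L B Zstar ≤ c * ‖φ‖ ^ 2 := hgap h.mem φ hφ
    _ ≤ c * (m * ((‖B + B.flip‖ + ‖p + p.flip‖) * dist Z Z')) ^ 2 := by gcongr
    _ = c * (m * (‖B + B.flip‖ + ‖p + p.flip‖)) ^ 2 * dist Z Z' ^ 2 := by ring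

end QuadraticObjective

end BlockDescent

section DiscretizedEnergy

-- The sup norm of the entries, which is dominated by the Frobenius norm.
attribute [local instance] Matrix.normedAddCommGroup Matrix.normedSpace

variable {K m : ℕ} (e ϱ : Fin K → ℝ) (C : Matrix (Fin K) (Fin K) ℝ) (β : ℝ)

lemma isPolyhedron_Sset : IsPolyhedron (Sset e ϱ) := by
  have hrow := IsPolyhedron.setOf_map_eq (ι := Fin K)
    ((Matrix.mulVecBilin ℝ ℝ).flip e : Matrix (Fin K) (Fin K) ℝ →ₗ[ℝ] _) fun _ => 1
  have hcol := IsPolyhedron.setOf_map_eq ((Matrix.mulVecBilin ℝ ℝ).flip (fun j => e j * ϱ j) ∘ₗ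
    (Matrix.transposeLinearEquiv (Fin K) (Fin K) ℝ ℝ).toLinearMap) ϱ
  have htrace := IsPolyhedron.hyperplane (Matrix.traceLinearMap (Fin K) ℝ ℝ) 0
  have hnonneg := IsPolyhedron.iInter fun a : Fin K => IsPolyhedron.iInter fun b : Fin K =>
    IsPolyhedron.halfSpace (Matrix.entryLinearMap ℝ ℝ a b) 0
  convert hrow.inter (hcol.inter (htrace.inter hnonneg)) using 1
  ext W
  simp [Sset, Matrix.mulVec_transpose]

variable (K) in
/-- The trace inner product `mip` as a bilinear form. -/
def mipForm : LinearMap.BilinForm ℝ (Matrix (Fin K) (Fin K) ℝ) :=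
  LinearMap.mk₂ ℝ mip
    (fun A B D => by simp only [mip, transpose_add, Matrix.add_mul, trace_add])
    (fun r A B => by simp only [mip, transpose_smul, Matrix.smul_mul, trace_smul])
    (fun A B D => by simp only [mip, Matrix.mul_add, trace_add])
    (fun r A B => by simp only [mip, Matrix.mul_smul, trace_smul])

lemma mipForm_apply (A B : Matrix (Fin K) (Fin K) ℝ) : mipForm K A B = mip A B := rfl

lemma norm_sq_le_mip_self (X : Matrix (Fin K) (Fin K) ℝ) : ‖X‖ ^ 2 ≤ mip X X := by
  calc ‖X‖ ^ 2 ≤ ∑ a, ‖X a‖ ^ 2 := pi_norm_sq_le_sum_norm_sq X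
    _ ≤ ∑ a, ∑ b, ‖X a b‖ ^ 2 := sum_le_sum fun a _ => pi_norm_sq_le_sum_norm_sq (X a)
    _ = mip X X := by
      rw [sum_comm]
      simp [mip, Matrix.trace, Matrix.mul_apply, sq]

lemma norm_le_nZ (Z : Fin m → Matrix (Fin K) (Fin K) ℝ) : ‖Z‖ ≤ nZ Z :=
  Real.le_sqrt_of_sq_le <| (pi_norm_sq_le_sum_norm_sq Z).trans <|
    sum_le_sum fun i _ => norm_sq_le_mip_self (Z i)

/-- The proximal term `(s / 2) * ‖X‖_F ^ 2` as a continuous bilinear form. -/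
def proxForm (K : ℕ) (s : ℝ) :
    Matrix (Fin K) (Fin K) ℝ →L[ℝ] Matrix (Fin K) (Fin K) ℝ →L[ℝ] ℝ :=
  ((s / 2) • mipForm K).toContinuousBilinearMap

lemma isCoercive_proxForm {s : ℝ} (hs : 0 < s) : IsCoercive (proxForm K s) := by
  refine ⟨s / 2, half_pos hs, fun X => ?_⟩
  calc s / 2 * ‖X‖ * ‖X‖ = s / 2 * ‖X‖ ^ 2 := by ring
    _ ≤ s / 2 * mip X X := by
      gcongr
      exact norm_sq_le_mip_self X
    _ = proxForm K s X X := rfl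

lemma exists_fB_eq_quadFun :
    ∃ (L : StrongDual ℝ (Fin m → Matrix (Fin K) (Fin K) ℝ))
      (B : (Fin m → Matrix (Fin K) (Fin K) ℝ) →L[ℝ] (Fin m → Matrix (Fin K) (Fin K) ℝ) →L[ℝ] ℝ),
      fB e ϱ C β = quadFun L B := by
  let T : Matrix (Fin K) (Fin K) ℝ →ₗ[ℝ] Matrix (Fin K) (Fin K) ℝ :=
    LinearMap.mulLeftRight ℝ (diagonal e * diagonal ϱ, diagonal e * C * diagonal e) +
      β • LinearMap.id
  have hT (X Y : Matrix (Fin K) (Fin K) ℝ) : mip X (T Y) =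
      mip X (diagonal e * diagonal ϱ * Y * diagonal e * C * diagonal e) + β * mip X Y := by
    simp only [T, ← mipForm_apply, LinearMap.add_apply, LinearMap.smul_apply, LinearMap.id_apply,
      LinearMap.mulLeftRight_apply, map_add, map_smul, smul_eq_mul, Matrix.mul_assoc]
  obtain ⟨L, B, hLB⟩ := exists_quadFun_eq_pairInteraction (ι := Fin m)
    ((mipForm K).flip (diagonal ϱ * diagonal e * C * diagonal e)).toContinuousLinearMap
    ((mipForm K).compl₂ T).toContinuousBilinearMap
  refine ⟨L, B, funext fun Z => ?_⟩
  calc fB e ϱ C β Z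
      = ∑ i, mip (Z i) (diagonal ϱ * diagonal e * C * diagonal e) +
          ∑ i, ∑ j ∈ Ioi i, mip (Z i) (T (Z j)) := by
        simp only [fB, fE, hT, sum_add_distrib, mul_sum, add_assoc]
    _ = quadFun L B Z := (hLB Z).symm

lemma IsPBCD.isProxSweep {e ϱ : Fin K → ℝ} {C : Matrix (Fin K) (Fin K) ℝ} {β σ : ℝ}
    {Zseq : ℕ → Fin m → Matrix (Fin K) (Fin K) ℝ} (h : IsPBCD e ϱ C β σ Zseq) (k : ℕ) :
    IsProxSweep (fB e ϱ C β) (proxForm K σ) (fun _ => Sset e ϱ) (Zseq k) (Zseq (k + 1)) := by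
  refine fun i => ⟨(h k i).1, isMinOn_iff.2 fun X hX => ?_⟩
  simp only [update_partialSweep]
  exact (h k i).2 X hX

theorem pbcd_exact_local_convergence_to_global_minimizer_general {σ : ℝ} (hσ : 0 < σ)
    {Zstar : Fin m → Matrix (Fin K) (Fin K) ℝ}
    (hmin : ∀ Z : Fin m → Matrix (Fin K) (Fin K) ℝ,
      (∀ i, Z i ∈ Sset e ϱ) → fB e ϱ C β Zstar ≤ fB e ϱ C β Z) :
    ∃ ε : ℝ, 0 < ε ∧
      ∀ Zseq : ℕ → Fin m → Matrix (Fin K) (Fin K) ℝ,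
        IsPBCD e ϱ C β σ Zseq →
        (∀ i, Zseq 0 i ∈ Sset e ϱ) →
        nZ (Zseq 0 - Zstar) < ε →
        ∃ Zopt : Fin m → Matrix (Fin K) (Fin K) ℝ,
          (∀ i, Zopt i ∈ Sset e ϱ) ∧
          (∀ Z : Fin m → Matrix (Fin K) (Fin K) ℝ,
            (∀ i, Z i ∈ Sset e ϱ) → fB e ϱ C β Zopt ≤ fB e ϱ C β Z) ∧
          Tendsto Zseq atTop (nhds Zopt) := by
  obtain ⟨L, B, hLB⟩ := exists_fB_eq_quadFun (m := m) e ϱ C β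
  have hmin' : IsMinOn (quadFun L B) (Set.univ.pi fun _ => Sset e ϱ) Zstar :=
    isMinOn_iff.2 fun Z hZ => hLB ▸ hmin Z (Set.mem_univ_pi.1 hZ)
  obtain ⟨ε, hε, hconv⟩ := Metric.eventually_nhds_iff.1 <|
    eventually_exists_tendsto_isMinOn_of_isProxSweep (fun _ => isPolyhedron_Sset e ϱ)
      (isCoercive_proxForm hσ) hmin'
  refine ⟨ε, hε, fun Zseq hseq hmem hnear => ?_⟩
  obtain ⟨Zopt, hZopt, hZopt_min, hlim⟩ := hconv
    ((dist_eq_norm_sub _ _).trans_lt ((norm_le_nZ _).trans_lt hnear))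
    (Set.mem_univ_pi.2 hmem) Zseq rfl fun k => hLB ▸ hseq.isProxSweep k
  exact ⟨Zopt, Set.mem_univ_pi.1 hZopt,
    fun Z hZ => hLB ▸ isMinOn_iff.1 hZopt_min Z (Set.mem_univ_pi.2 hZ), hlim⟩

end DiscretizedEnergy

/-- Theorem 3.1, part 2.
For `σ > 0` and every global minimizer `Z*` of `(P_β)` there exists `ε > 0` such that every
exact PBCD sequence started at some `Z^{(0)} ∈ S^{N−1}` with `‖Z^{(0)} − Z*‖_F < ε` converges
to a global minimizer of `(P_β)`. -/
theorem pbcd_exact_local_convergence_to_global_minimizer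
    (K N : ℕ) (hK : 1 ≤ K) (hN : 3 ≤ N)
    (e ϱ : Fin K → ℝ) (he : ∀ a, 0 < e a) (hϱ : ∀ a, 0 ≤ ϱ a)
    (C : Matrix (Fin K) (Fin K) ℝ) (hCsym : Cᵀ = C)
    (hC0 : ∀ a b, 0 ≤ C a b) (hCd : ∀ a, C a a = 0)
    (hS : (Sset e ϱ).Nonempty)
    (β σ : ℝ) (hβ : 0 < β) (hσ : 0 < σ) :
    ∀ Zstar : Fin (N - 1) → Matrix (Fin K) (Fin K) ℝ,
      (∀ i, Zstar i ∈ Sset e ϱ) →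
      (∀ Z : Fin (N - 1) → Matrix (Fin K) (Fin K) ℝ,
        (∀ i, Z i ∈ Sset e ϱ) → fB e ϱ C β Zstar ≤ fB e ϱ C β Z) →
      ∃ ε : ℝ, 0 < ε ∧
        ∀ Zseq : ℕ → Fin (N - 1) → Matrix (Fin K) (Fin K) ℝ,
          IsPBCD e ϱ C β σ Zseq →
          (∀ i, Zseq 0 i ∈ Sset e ϱ) →
          nZ (Zseq 0 - Zstar) < ε →
          ∃ Zopt : Fin (N - 1) → Matrix (Fin K) (Fin K) ℝ,
            (∀ i, Zopt i ∈ Sset e ϱ) ∧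
            (∀ Z : Fin (N - 1) → Matrix (Fin K) (Fin K) ℝ,
              (∀ i, Z i ∈ Sset e ϱ) → fB e ϱ C β Zopt ≤ fB e ϱ C β Z) ∧
            Tendsto Zseq atTop (nhds Zopt) := by
  exact fun _ _ hmin => pbcd_exact_local_convergence_to_global_minimizer_general e ϱ C β hσ hmin
end
end
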